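/- Let D > 1 be a squarefree integer, H = ℚ(√D), and m, R positive integers. Suppose there exists an mO_H-universal classical totally positive definite quadratic O_H-lattice of rank R. Write the periodic continued fraction expansion ξ_D = [u_0; u_1, u_2, …]. Then u_{2i+1} < B(R,m) for every integer i ≥ 0. -/

import Mathlib

open NumberField

/-- The Gauss map `y ↦ {1/y}`. -/
noncomputable def gaussMap (y : ℝ) : ℝ := Int.fract y⁻¹

/-- For an irrational `x ∈ (0,1)`, `cfCoeff x n` is the `n`-th coefficient `u_n(x)`
(`n ≥ 1`) of the continued fraction expansion `x = [0; u_1(x), u_2(x), …]`;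
the coefficients `u_n` (`n ≥ 1`) of `ξ = [u_0; u_1, u_2, …]` are those of `ξ mod 1`. -/
noncomputable def cfCoeff (x : ℝ) (n : ℕ) : ℕ := ⌊(gaussMap^[n - 1] x)⁻¹⌋₊

/-- The generator of the ring of integers of `ℚ(√D)`. -/
noncomputable def xi (D : ℕ) : ℝ :=
  if D % 4 = 1 then (1 + Real.sqrt D) / 2 else Real.sqrt D

/-- An element of a field `K` is totally positive if its image under every ring
homomorphism to `ℝ` is positive. -/
def IsTotPos {K : Type*} [Field K] (x : K) : Prop := ∀ φ : K →+* ℝ, 0 < φ x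

/-- `K` admits a classical totally positive definite quadratic `𝓞 K`-lattice of rank
`R` representing all totally positive elements of `m·𝓞 K`. -/
def HasClassicalMUniversal (K : Type*) [Field K] (R m : ℕ) : Prop :=
  ∃ (B : (Fin R → K) →ₗ[K] (Fin R → K) →ₗ[K] K)
    (Λ : Submodule (RingOfIntegers K) (Fin R → K)),
    (∀ v w, B v w = B w v) ∧
    Λ.FG ∧
    Submodule.span K (Λ : Set (Fin R → K)) = ⊤ ∧
    (∀ v ∈ Λ, v ≠ 0 → IsTotPos (B v v)) ∧
    (∀ v ∈ Λ, ∀ w ∈ Λ, ∃ c : RingOfIntegers K, algebraMap (RingOfIntegers K) K c = B v w) ∧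
    (∀ a : RingOfIntegers K, IsTotPos ((m : K) * algebraMap (RingOfIntegers K) K a) →
      ∃ v ∈ Λ, B v v = (m : K) * algebraMap (RingOfIntegers K) K a)

/-- The real quadratic field `ℚ(√D)`, realized as a subfield of `ℝ`. -/
noncomputable def QsqrtD (D : ℕ) : IntermediateField ℚ ℝ :=
  IntermediateField.adjoin ℚ {Real.sqrt D}

/-- `C(r,1) := 2r`, `C(r,2) := max {480, 2r(r−1)}`, and for `n ≥ 3`,
`C(r,n) := (π^{r/2}/Γ(r/2+1))·n^{r/2}
  + Σ_{m=0}^{r−1} (r choose m)·(π^{m/2}/Γ(m/2+1))·n^{m/2}`. -/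
noncomputable def Cbound (r n : ℕ) : ℝ :=
  if n = 1 then 2 * (r : ℝ)
  else if n = 2 then max 480 (2 * (r : ℝ) * ((r : ℝ) - 1))
  else Real.pi ^ ((r : ℝ) / 2) / Real.Gamma ((r : ℝ) / 2 + 1) * (n : ℝ) ^ ((r : ℝ) / 2)
    + ∑ m ∈ Finset.range r,
        (r.choose m : ℝ) * (Real.pi ^ ((m : ℝ) / 2) / Real.Gamma ((m : ℝ) / 2 + 1))
          * (n : ℝ) ^ ((m : ℝ) / 2)

/-- `B(R,m) := C(2R,m)/2`. -/
noncomputable def Bbound (R m : ℕ) : ℝ := Cbound (2 * R) m / 2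
/- Let `α`, `β` be two consecutive convergents of `ξ = xi D`, chosen so that the semiconvergents
`α + r β`, `0 ≤ r ≤ u = u_{2i+1}`, are totally positive. Suitable positive weights on the two real
embeddings (the trace form twisted by an element of the codifferent) give all of them trace one.
Hence an `m𝓞`-universal lattice of rank `R`, with the correspondingly twisted trace form, contains
`u + 1` vectors of norm `m`, no two of them opposite, which represent the `m (α + r β)` and pairwise
have integral inner products in `ℝ^{2R}`. It remains to show that there are at most `C(2R, m) / 2`
such vectors:
* for `m = 1` they are orthonormal;
* for `m = 2` they lie in a root system, where every root makes an angle of `60°` with at most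
  `max 56 (4 dim - 8)` others; the trace of `x ↦ ∑ ⟪α, x⟫ α` then bounds the number of roots;
* for `3 ≤ m ≤ R` the polynomial method applies, as the inner products take few values;
* for `m > R` one packs balls. The embedding `ℝ^{2R} = ℝ^R ⊕ ℝ^R` comes from the two real places,
  and as the first component of the `r`-th vector has squared norm at most `m (r + 1) / (u + 1)`,
  initial segments of the sequence are packed essentially in dimension `R` only. -/

section PolynomialMethod

variable {σ ι X A 𝕜 : Type*} [Field 𝕜]

open scoped Pointwise in
lemma range_pow_subset_range_sym_prod [CommMonoid A] (e : σ → A) (q : ℕ) :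
    Set.range e ^ q ⊆ Set.range fun s : Sym σ q => ((s : Multiset σ).map e).prod := by
  induction q with
  | zero => rintro _ rfl; exact ⟨Sym.nil, by simp⟩
  | succ q ih =>
    rw [pow_succ']
    rintro _ ⟨_, ⟨i, rfl⟩, _, ha, rfl⟩
    obtain ⟨s, rfl⟩ := ih ha
    exact ⟨i ::ₛ s, by simp [Sym.coe_cons]⟩

lemma finrank_span_range_pow_le [CommRing A] [Algebra 𝕜 A] [Fintype σ] (e : σ → A) (q : ℕ) :
    Module.finrank 𝕜 ↥(Submodule.span 𝕜 (Set.range e) ^ q) ≤ (Fintype.card σ).multichoose q := by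
  classical
  rw [Submodule.span_pow, ← Sym.card_sym_eq_multichoose σ q]
  have := FiniteDimensional.span_of_finite 𝕜
    (Set.finite_range fun s : Sym σ q => ((s : Multiset σ).map e).prod)
  exact (Submodule.finrank_mono (Submodule.span_mono (range_pow_subset_range_sym_prod e q))).trans
    (finrank_range_le_card fun s : Sym σ q => ((s : Multiset σ).map e).prod)

lemma finset_prod_mem_pow_card [CommRing A] [Algebra 𝕜 A] {W : Submodule 𝕜 A} {S : Finset σ}
    {f : σ → A} (hf : ∀ t ∈ S, f t ∈ W) : ∏ t ∈ S, f t ∈ W ^ S.card := by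
  classical
  induction S using Finset.induction_on with
  | empty => exact ⟨1, by simp⟩
  | insert t S ht ih =>
    rw [Finset.prod_insert ht, Finset.card_insert_of_notMem ht, pow_succ']
    exact Submodule.mul_mem_mul (hf t (S.mem_insert_self t))
      (ih fun s hs => hf s (Finset.mem_insert_of_mem hs))

lemma card_le_finrank_of_triangular [Fintype ι] {W : Submodule 𝕜 (X → 𝕜)} [Module.Finite 𝕜 W]
    (v : ι → X) (f : ι → X → 𝕜) (hf : ∀ i, f i ∈ W) (hdiag : ∀ i, f i (v i) ≠ 0)
    (hoff : Pairwise fun i j => f i (v j) = 0) :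
    Fintype.card ι ≤ Module.finrank 𝕜 W := by
  have hli : LinearIndependent 𝕜 f := by
    rw [Fintype.linearIndependent_iff]
    intro c hc i
    have hi := congrFun hc (v i)
    simp only [Finset.sum_apply, Pi.smul_apply, smul_eq_mul, Pi.zero_apply] at hi
    rw [Finset.sum_eq_single i (fun j _ hj => by rw [hoff hj, mul_zero]) (by simp)] at hi
    exact (mul_eq_zero.mp hi).resolve_right (hdiag i)
  have hliW : LinearIndependent 𝕜 fun i => (⟨f i, hf i⟩ : W) :=
    LinearIndependent.of_comp W.subtype hli
  exact hliW.fintype_card_le_finrank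

lemma card_le_multichoose_of_mem_span_pow [Fintype σ] [Fintype ι] (e : σ → X → 𝕜) (q : ℕ)
    (v : ι → X) (f : ι → X → 𝕜) (hf : ∀ i, f i ∈ Submodule.span 𝕜 (Set.range e) ^ q)
    (hdiag : ∀ i, f i (v i) ≠ 0) (hoff : Pairwise fun i j => f i (v j) = 0) :
    Fintype.card ι ≤ (Fintype.card σ).multichoose q := by
  have : Module.Finite 𝕜 ↥(Submodule.span 𝕜 (Set.range e) ^ q) :=
    Module.Finite.of_fg ((Submodule.fg_span (Set.finite_range e)).pow q)
  exact (card_le_finrank_of_triangular v f hf hdiag hoff).trans (finrank_span_range_pow_le e q)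

end PolynomialMethod

section SphericalCodes

open scoped RealInnerProductSpace

variable {ι V : Type*} [Fintype ι] [NormedAddCommGroup V] [InnerProductSpace ℝ V]
  [FiniteDimensional ℝ V]

lemma inner_mem_span_inner_basis (w : V) :
    (fun x => ⟪x, w⟫) ∈ Submodule.span ℝ (Set.range fun k x => ⟪x, stdOrthonormalBasis ℝ V k⟫) := by
  have h : (fun x => ⟪x, w⟫) = ∑ k, ⟪stdOrthonormalBasis ℝ V k, w⟫ •
      fun x => ⟪x, stdOrthonormalBasis ℝ V k⟫ := by
    ext x
    simp [← (stdOrthonormalBasis ℝ V).sum_inner_mul_inner x w, mul_comm]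
  rw [h]
  exact Submodule.sum_mem _ fun k _ =>
    Submodule.smul_mem _ _ (Submodule.subset_span (Set.mem_range_self k))

lemma inner_self_mem_span_inner_basis_sq :
    (fun x : V => ⟪x, x⟫) ∈
      Submodule.span ℝ (Set.range fun k (x : V) => ⟪x, stdOrthonormalBasis ℝ V k⟫) ^ 2 := by
  have h : (fun x : V => ⟪x, x⟫) =
      ∑ k, (fun x => ⟪x, stdOrthonormalBasis ℝ V k⟫) ^ 2 := by
    ext x
    simp [← (stdOrthonormalBasis ℝ V).sum_sq_inner_left x]
  rw [h]
  exact Submodule.sum_mem _ fun k _ =>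
    Submodule.pow_mem_pow _ (Submodule.subset_span (Set.mem_range_self k)) 2

theorem card_le_choose_of_inner_mem (v : ι → V) (S : Finset ℝ) (hself : ∀ i, ⟪v i, v i⟫ ∉ S)
    (hne : Pairwise fun i j => ⟪v j, v i⟫ ∈ S) :
    Fintype.card ι ≤ (Module.finrank ℝ V + S.card).choose S.card := by
  let e : Option (Fin (Module.finrank ℝ V)) → V → ℝ := fun k x =>
    k.elim 1 fun k => ⟪x, stdOrthonormalBasis ℝ V k⟫
  have hone : (1 : V → ℝ) ∈ Submodule.span ℝ (Set.range e) := Submodule.subset_span ⟨none, rfl⟩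
  have hinner (w : V) : (fun x => ⟪x, w⟫) ∈ Submodule.span ℝ (Set.range e) :=
    Submodule.span_mono (Set.range_comp_subset_range some e) (inner_mem_span_inner_basis w)
  have h := card_le_multichoose_of_mem_span_pow e S.card v
    (fun i => ∏ t ∈ S, ((fun x => ⟪x, v i⟫) - t • 1)) (fun i => ?_) (fun i => ?_)
    (fun i j hij => ?_)
  · simpa [Nat.multichoose_eq, add_right_comm] using h
  · exact finset_prod_mem_pow_card fun t _ =>
      Submodule.sub_mem _ (hinner _) (Submodule.smul_mem _ _ hone)
  · simp only [Finset.prod_apply, Finset.prod_ne_zero_iff]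
    intro t ht h0
    exact hself i (by simpa [sub_eq_zero.1 (by simpa using h0)] using ht)
  · simp only [Finset.prod_apply]
    exact Finset.prod_eq_zero (hne hij) (by simp)

/- The annihilating polynomials `⟪x, v⟫ ∏ (⟪x, v⟫² - (t²/m) ⟪x, x⟫)` are homogeneous of
degree `2m - 1`. -/
theorem card_le_multichoose_of_abs_inner_lt (v : ι → V) (m : ℕ) (hm : 1 ≤ m)
    (hself : ∀ i, ⟪v i, v i⟫ = (m : ℝ))
    (hne : Pairwise fun i j => ∃ t : ℤ, |t| < m ∧ ⟪v j, v i⟫ = (t : ℝ)) :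
    Fintype.card ι ≤ (Module.finrank ℝ V).multichoose (2 * m - 1) := by
  let e : Fin (Module.finrank ℝ V) → V → ℝ := fun k x => ⟪x, stdOrthonormalBasis ℝ V k⟫
  have hm0 : (m : ℝ) ≠ 0 := by positivity
  have h := card_le_multichoose_of_mem_span_pow e (2 * m - 1) v
    (fun i => (fun x => ⟪x, v i⟫) * ∏ t ∈ Finset.Ico 1 m,
      ((fun x => ⟪x, v i⟫) ^ 2 - ((t : ℝ) ^ 2 / m) • fun x => ⟪x, x⟫))
    (fun i => ?_) (fun i => ?_) (fun i j hij => ?_)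
  · simpa using h
  · have hdeg : 2 * m - 1 = 1 + 2 * (Finset.Ico 1 m).card := by simp; omega
    rw [hdeg, pow_add, pow_one, pow_mul]
    exact Submodule.mul_mem_mul (inner_mem_span_inner_basis _) <|
      finset_prod_mem_pow_card fun t _ => Submodule.sub_mem _
        (Submodule.pow_mem_pow _ (inner_mem_span_inner_basis _) 2)
        (Submodule.smul_mem _ _ inner_self_mem_span_inner_basis_sq)
  · simp only [Pi.mul_apply, Finset.prod_apply, Pi.sub_apply, Pi.pow_apply, Pi.smul_apply, hself,
      smul_eq_mul, div_mul_cancel₀ _ hm0]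
    refine mul_ne_zero hm0 (Finset.prod_ne_zero_iff.2 fun t ht => ?_)
    have ht' : (t : ℝ) < m := by exact_mod_cast (Finset.mem_Ico.1 ht).2
    exact (sub_pos.2 (pow_lt_pow_left₀ ht' t.cast_nonneg two_ne_zero)).ne'
  · obtain ⟨t, htm, ht⟩ := hne hij
    simp only [Pi.mul_apply, Finset.prod_apply, Pi.sub_apply, Pi.pow_apply, Pi.smul_apply, hself,
      ht, smul_eq_mul, div_mul_cancel₀ _ hm0]
    rcases eq_or_ne t 0 with rfl | ht0
    · simp
    · refine mul_eq_zero_of_right _ (Finset.prod_eq_zero (i := t.natAbs) ?_ ?_)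
      · rw [Finset.mem_Ico]; rw [Int.abs_eq_natAbs] at htm; omega
      · rw [← Int.cast_natCast t.natAbs, Int.natCast_natAbs, Int.cast_abs, sq_abs, sub_self]

end SphericalCodes

section Packing

open MeasureTheory

variable {ι : Type*} [Fintype ι]

lemma sum_measure_le_of_forall_card_le {α : Type*} [MeasurableSpace α] (μ : Measure α)
    {s : ι → Set α} (hs : ∀ i, MeasurableSet (s i)) {A : Set α} (hsA : ∀ i, s i ⊆ A)
    (n : ℕ) (hn : ∀ x, Nat.card {i // x ∈ s i} ≤ n) :
    ∑ i, μ (s i) ≤ n * μ A := by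
  classical
  calc ∑ i, μ (s i) = ∫⁻ x, ∑ i, (s i).indicator 1 x ∂μ := by
        rw [lintegral_finsetSum _ fun i _ => measurable_one.indicator (hs i)]
        simp only [lintegral_indicator_one (hs _)]
    _ ≤ ∫⁻ x, A.indicator (fun _ => (n : ENNReal)) x ∂μ := by
        refine lintegral_mono fun x => ?_
        by_cases hx : x ∈ A
        · simpa [Set.indicator_apply, hx, Fintype.card_subtype] using hn x
        · simp [hx, fun i => mt (@hsA i x) hx]
    _ ≤ n * μ A := lintegral_indicator_const_le A _

theorem card_le_mul_one_add_div_pow {F : Type*} [NormedAddCommGroup F] [NormedSpace ℝ F]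
    [FiniteDimensional ℝ F] (p : ι → F) {T ρ : ℝ} (hT : 0 ≤ T) (hρ : 0 < ρ)
    (hp : ∀ i, ‖p i‖ ≤ T) (n : ℕ) (hn : ∀ x, Nat.card {i // x ∈ Metric.ball (p i) ρ} ≤ n) :
    (Fintype.card ι : ℝ) ≤ n * (1 + T / ρ) ^ Module.finrank ℝ F := by
  borelize F
  have hsub (i : ι) : Metric.ball (p i) ρ ⊆ Metric.ball 0 (ρ + T) :=
    Metric.ball_subset_ball' (by rw [dist_zero_right]; linarith [hp i])
  have hmeas := sum_measure_le_of_forall_card_le Measure.addHaar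
    (fun i => Metric.isOpen_ball.measurableSet) hsub n hn
  simp only [Measure.addHaar_ball_of_pos _ _ hρ,
    Measure.addHaar_ball_of_pos _ (0 : F) (add_pos_of_pos_of_nonneg hρ hT), Finset.sum_const,
    Finset.card_univ, nsmul_eq_mul, ← mul_assoc] at hmeas
  rw [ENNReal.mul_le_mul_iff_left (Metric.measure_ball_pos _ 0 one_pos).ne' measure_ball_lt_top.ne,
    ← ENNReal.ofReal_natCast, ← ENNReal.ofReal_natCast, ← ENNReal.ofReal_mul (by positivity),
    ← ENNReal.ofReal_mul (by positivity), ENNReal.ofReal_le_ofReal_iff (by positivity)] at hmeas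
  rw [one_add_div hρ.ne', div_pow, ← mul_div_assoc, le_div_iff₀ (by positivity)]
  exact hmeas

end Packing

open scoped RealInnerProductSpace in
/-- A family of distinct vectors of squared norm `m` with integral inner products: distinct
vectors of norm `m` in an integral lattice. -/
structure IsNormSystem {ι V : Type*} [NormedAddCommGroup V] [InnerProductSpace ℝ V]
    (m : ℕ) (v : ι → V) : Prop where
  inner_self : ∀ i, ⟪v i, v i⟫ = (m : ℝ)
  exists_int : ∀ i j, ∃ t : ℤ, ⟪v i, v j⟫ = (t : ℝ)
  injective : Function.Injective v

namespace IsNormSystem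

open scoped RealInnerProductSpace

variable {ι V : Type*} [NormedAddCommGroup V] [InnerProductSpace ℝ V] {m : ℕ} {v : ι → V}

lemma norm_eq (hv : IsNormSystem m v) (i : ι) : ‖v i‖ = √m := by
  rw [norm_eq_sqrt_real_inner, hv.inner_self]

lemma norm_sub_sq (hv : IsNormSystem m v) (i j : ι) :
    ‖v i - v j‖ ^ 2 = 2 * (m - ⟪v i, v j⟫) := by
  rw [norm_sub_sq_real, ← real_inner_self_eq_norm_sq, ← real_inner_self_eq_norm_sq,
    hv.inner_self, hv.inner_self]
  ring

lemma inner_lt (hv : IsNormSystem m v) {i j : ι} (hij : i ≠ j) : ⟪v i, v j⟫ < m := by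
  have hpos : 0 < ‖v i - v j‖ ^ 2 := pow_pos (norm_sub_pos_iff.2 (hv.injective.ne hij)) 2
  linarith [hv.norm_sub_sq i j]

lemma comp (hv : IsNormSystem m v) {κ : Type*} {f : κ → ι} (hf : Function.Injective f) :
    IsNormSystem m (v ∘ f) :=
  ⟨fun i => hv.inner_self (f i), fun i j => hv.exists_int (f i) (f j), hv.injective.comp hf⟩

lemma symmetrize (hv : IsNormSystem m v) (hanti : ∀ i j, v i ≠ -v j) :
    IsNormSystem m (Sum.elim v fun i => -v i) where
  inner_self := by rintro (i | i) <;> simp [hv.norm_eq]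
  exists_int := by
    rintro (i | i) (j | j) <;> obtain ⟨t, ht⟩ := hv.exists_int i j
    · exact ⟨t, ht⟩
    · exact ⟨-t, by simp [ht]⟩
    · exact ⟨-t, by simp [ht]⟩
    · exact ⟨t, by simp [ht]⟩
  injective := hv.injective.sumElim (neg_injective.comp hv.injective) hanti

lemma exists_abs_lt (hv : IsNormSystem m v) (hanti : ∀ i j, v i ≠ -v j) {i j : ι} (hij : i ≠ j) :
    ∃ t : ℤ, |t| < m ∧ ⟪v i, v j⟫ = (t : ℝ) := by
  obtain ⟨t, ht⟩ := hv.exists_int i j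
  have h₁ := hv.inner_lt hij
  have h₂ := (hv.symmetrize hanti).inner_lt (i := .inl i) (j := .inr j) (by simp)
  simp only [Sum.elim_inl, Sum.elim_inr, inner_neg_right] at h₂
  refine ⟨t, abs_lt.2 ⟨?_, ?_⟩, ht⟩
  · have : -(m : ℝ) < t := by linarith
    exact_mod_cast this
  · rw [ht] at h₁; exact_mod_cast h₁

variable [Fintype ι] [FiniteDimensional ℝ V]

theorem card_le_finrank (hv : IsNormSystem 1 v) (hanti : ∀ i j, v i ≠ -v j) :
    Fintype.card ι ≤ Module.finrank ℝ V := by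
  have horth : Orthonormal ℝ v := by
    refine ⟨fun i => by simp [hv.norm_eq], fun i j hij => ?_⟩
    obtain ⟨t, ht, h⟩ := hv.exists_abs_lt hanti hij
    have ht0 : t = 0 := Int.abs_lt_one_iff.1 (by exact_mod_cast ht)
    rw [h, ht0, Int.cast_zero]
  exact horth.linearIndependent.fintype_card_le_finrank

theorem card_le_multichoose (hv : IsNormSystem m v) (hm : 1 ≤ m) (hanti : ∀ i j, v i ≠ -v j) :
    Fintype.card ι ≤ (Module.finrank ℝ V).multichoose (2 * m - 1) :=
  card_le_multichoose_of_abs_inner_lt v m hm hv.inner_self fun _ _ hij =>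
    hv.exists_abs_lt hanti hij.symm

lemma card_le_choose_of_lt_inner (hv : IsNormSystem m v) (k : ℕ)
    (hcap : ∀ i j, (m : ℝ) - k - 1 < ⟪v i, v j⟫) :
    Fintype.card ι ≤ (Module.finrank ℝ V + k).choose k := by
  have hcard : ((Finset.range k).image fun s : ℕ => (m : ℝ) - 1 - s).card = k := by
    rw [Finset.card_image_of_injective _ (fun a b h => by simpa using h), Finset.card_range]
  have h := card_le_choose_of_inner_mem v ((Finset.range k).image fun s : ℕ => (m : ℝ) - 1 - s)
    (fun i hi => ?_) (fun i j hij => ?_)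
  · rwa [hcard] at h
  · obtain ⟨s, -, hs⟩ := Finset.mem_image.1 hi
    rw [hv.inner_self] at hs
    linarith [s.cast_nonneg (α := ℝ)]
  · obtain ⟨t, ht⟩ := hv.exists_int j i
    have hlt : t < m := by exact_mod_cast ht ▸ hv.inner_lt hij.symm
    have hgt : (m : ℤ) - k - 1 < t := by exact_mod_cast ht ▸ hcap j i
    refine Finset.mem_image.2 ⟨(m - 1 - t).toNat, Finset.mem_range.2 (by omega), ?_⟩
    rw [ht, ← Int.cast_natCast (m - 1 - t).toNat, Int.toNat_of_nonneg (by omega)]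
    push_cast
    ring

/- Balls of radius `ρ` around the points `w i` overlap only for vectors `v i` in a common cap. -/
theorem card_le_choose_mul_pow (hv : IsNormSystem m v) {F : Type*} [NormedAddCommGroup F]
    [NormedSpace ℝ F] [FiniteDimensional ℝ F] {w : ι → F} (hw : ∀ i, ‖w i‖ ≤ √m) {τ ρ : ℝ} {k : ℕ}
    (hvw : ∀ i j, ‖v i - v j‖ ^ 2 ≤ ‖w i - w j‖ ^ 2 + 4 * τ) (hρ : 0 < ρ)
    (hk : 2 * τ + 2 * ρ ^ 2 ≤ k + 1) :
    (Fintype.card ι : ℝ) ≤ ((Module.finrank ℝ V + k).choose k : ℕ) *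
      (1 + √m / ρ) ^ Module.finrank ℝ F := by
  refine card_le_mul_one_add_div_pow w (Real.sqrt_nonneg _) hρ hw _ fun x => ?_
  have := Fintype.ofFinite {i // x ∈ Metric.ball (w i) ρ}
  rw [Nat.card_eq_fintype_card]
  refine (hv.comp Subtype.val_injective).card_le_choose_of_lt_inner k ?_
  rintro ⟨i, hi⟩ ⟨j, hj⟩
  have hdist : ‖w i - w j‖ < 2 * ρ := by
    rw [← dist_eq_norm]
    linarith [dist_triangle_left (w i) (w j) x, Metric.mem_ball.1 hi, Metric.mem_ball.1 hj]
  have hsq : ‖w i - w j‖ ^ 2 < (2 * ρ) ^ 2 := pow_lt_pow_left₀ hdist (norm_nonneg _) two_ne_zero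
  change (m : ℝ) - k - 1 < ⟪v i, v j⟫
  linarith [hvw i j, hv.norm_sub_sq i j]

end IsNormSystem

section FrameOperator

open scoped RealInnerProductSpace

variable {ι V : Type*} [Fintype ι] [NormedAddCommGroup V] [InnerProductSpace ℝ V]

/- With `T x = ∑ ⟪w i, x⟫ w i`, the hypothesis gives `‖T x‖² ≤ c ⟪T x, x⟫`, and Cauchy–Schwarz
turns this into `⟪T x, x⟫ ≤ c ‖x‖²`. -/
theorem sum_inner_sq_le_of_eigenvector (w : ι → V) {c : ℝ} (hc : 0 ≤ c) (a : ι → ℝ)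
    (hac : ∀ i, a i ≤ c) (hw : ∀ i, ∑ j, ⟪w j, w i⟫ • w j = a i • w i) (x : V) :
    ∑ i, ⟪w i, x⟫ ^ 2 ≤ c * ‖x‖ ^ 2 := by
  set y := ∑ i, ⟪w i, x⟫ • w i with hy
  have hyz (z : V) : ⟪y, z⟫ = ∑ i, ⟪w i, x⟫ * ⟪w i, z⟫ := by
    simp only [hy, sum_inner, real_inner_smul_left]
  have hyx : ⟪y, x⟫ = ∑ i, ⟪w i, x⟫ ^ 2 := by simp only [hyz, sq]
  have hwy (i : ι) : ⟪w i, y⟫ = a i * ⟪w i, x⟫ := by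
    rw [← real_inner_smul_left, ← hw, real_inner_comm, hyz]
    simp only [sum_inner, real_inner_smul_left, mul_comm]
  have hyy : ⟪y, y⟫ ≤ c * ⟪y, x⟫ := by
    rw [hyz, hyx, Finset.mul_sum]
    refine Finset.sum_le_sum fun i _ => ?_
    rw [hwy]
    linarith [mul_le_mul_of_nonneg_right (hac i) (sq_nonneg ⟪w i, x⟫)]
  rw [← hyx, ← real_inner_self_eq_norm_sq]
  have hyx0 : 0 ≤ ⟪y, x⟫ := hyx ▸ Finset.sum_nonneg fun i _ => sq_nonneg _
  rcases hyx0.eq_or_lt with h0 | hpos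
  · exact h0 ▸ mul_nonneg hc real_inner_self_nonneg
  · refine le_of_mul_le_mul_left ?_ hpos
    calc ⟪y, x⟫ * ⟪y, x⟫ ≤ ⟪y, y⟫ * ⟪x, x⟫ := real_inner_mul_inner_self_le y x
      _ ≤ c * ⟪y, x⟫ * ⟪x, x⟫ := mul_le_mul_of_nonneg_right hyy real_inner_self_nonneg
      _ = ⟪y, x⟫ * (c * ⟪x, x⟫) := by ring

lemma sum_norm_sq_le_mul_finrank [FiniteDimensional ℝ V] (w : ι → V) {c : ℝ}
    (hw : ∀ x, ∑ i, ⟪w i, x⟫ ^ 2 ≤ c * ‖x‖ ^ 2) :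
    ∑ i, ‖w i‖ ^ 2 ≤ c * Module.finrank ℝ V := by
  let b := stdOrthonormalBasis ℝ V
  calc ∑ i, ‖w i‖ ^ 2 = ∑ k, ∑ i, ⟪w i, b k⟫ ^ 2 := by
        simp only [← b.sum_sq_inner_left]
        exact Finset.sum_comm
    _ ≤ ∑ k, c * ‖b k‖ ^ 2 := Finset.sum_le_sum fun k _ => hw (b k)
    _ = c * Module.finrank ℝ V := by simp [mul_comm]

lemma sum_inner_sq_le_of_orthogonal_or_opposite (w : ι → V) (hnorm : ∀ i, ‖w i‖ = 1)
    (hw : Pairwise fun i j => ⟪w i, w j⟫ = 0 ∨ ⟪w i, w j⟫ = -1) (x : V) :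
    ∑ i, ⟪w i, x⟫ ^ 2 ≤ 2 * ‖x‖ ^ 2 := by
  classical
  have hself (i : ι) : ⟪w i, w i⟫ = 1 := by simp [hnorm]
  refine sum_inner_sq_le_of_eigenvector w zero_le_two
    (fun i => if ∃ j, ⟪w j, w i⟫ = -1 then 2 else 1) (fun i => by split_ifs <;> norm_num)
    (fun i => ?_) x
  split_ifs with h
  · obtain ⟨j, hj⟩ := h
    have hopp : w j = -w i := (inner_eq_neg_one_iff_of_norm_eq_one (hnorm j) (hnorm i)).1 hj
    have hij : i ≠ j := by rintro rfl; linarith [hself i]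
    rw [Fintype.sum_eq_add i j hij fun k ⟨hki, hkj⟩ => ?_, hself, hj, hopp]
    · module
    · have h : ⟪w k, w j⟫ = 0 ∨ ⟪w k, w j⟫ = -1 := hw hkj
      refine smul_eq_zero_of_left ((hw hki).resolve_right fun hk => ?_) _
      norm_num [hopp, inner_neg_right, hk] at h
  · rw [Fintype.sum_eq_single i fun j hji => ?_, hself]
    rw [(hw hji).resolve_right fun hj => h ⟨j, hj⟩, zero_smul]

lemma card_le_two_mul_finrank_of_orthogonal_or_opposite [FiniteDimensional ℝ V] (w : ι → V)
    (hnorm : ∀ i, ‖w i‖ = 1) (hw : Pairwise fun i j => ⟪w i, w j⟫ = 0 ∨ ⟪w i, w j⟫ = -1) :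
    Fintype.card ι ≤ 2 * Module.finrank ℝ V := by
  have h := sum_norm_sq_le_mul_finrank w (sum_inner_sq_le_of_orthogonal_or_opposite w hnorm hw)
  simp only [hnorm, one_pow, Finset.sum_const, Finset.card_univ, nsmul_eq_mul, mul_one] at h
  exact_mod_cast h

end FrameOperator

namespace IsNormSystem

open scoped RealInnerProductSpace

variable {ι V : Type*} [NormedAddCommGroup V] [InnerProductSpace ℝ V] {m : ℕ} {v : ι → V}

lemma finset_insert [DecidableEq V] {S : Finset V} (hS : IsNormSystem m ((↑) : S → V)) {x : V}
    (hx : ⟪x, x⟫ = (m : ℝ)) (hxS : ∀ y ∈ S, ∃ t : ℤ, ⟪x, y⟫ = (t : ℝ)) :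
    IsNormSystem m ((↑) : ↥(insert x S) → V) where
  inner_self := by
    rintro ⟨y, hy⟩
    rcases Finset.mem_insert.1 hy with rfl | hy
    exacts [hx, hS.inner_self ⟨y, hy⟩]
  exists_int := by
    rintro ⟨y, hy⟩ ⟨z, hz⟩
    rcases Finset.mem_insert.1 hy with rfl | hyS <;> rcases Finset.mem_insert.1 hz with rfl | hzS
    · exact ⟨m, by simpa using hx⟩
    · exact hxS z hzS
    · simpa only [real_inner_comm y] using hxS y hyS
    · exact hS.exists_int ⟨y, hyS⟩ ⟨z, hzS⟩
  injective := Subtype.val_injective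

lemma exists_maximal [Finite ι] [FiniteDimensional ℝ V] (hv : IsNormSystem m v) :
    ∃ S : Finset V, (∀ i, v i ∈ S) ∧ IsNormSystem m ((↑) : S → V) ∧
      ∀ x, ⟪x, x⟫ = (m : ℝ) → (∀ y ∈ S, ∃ t : ℤ, ⟪x, y⟫ = (t : ℝ)) → x ∈ S := by
  classical
  have := Fintype.ofFinite ι
  have hrange : IsNormSystem m ((↑) : ↥(Finset.univ.image v) → V) := by
    refine ⟨?_, ?_, Subtype.val_injective⟩
    · rintro ⟨x, hx⟩
      obtain ⟨i, -, rfl⟩ := Finset.mem_image.1 hx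
      exact hv.inner_self i
    · rintro ⟨x, hx⟩ ⟨y, hy⟩
      obtain ⟨i, -, rfl⟩ := Finset.mem_image.1 hx
      obtain ⟨j, -, rfl⟩ := Finset.mem_image.1 hy
      exact hv.exists_int i j
  have hbound {S : Finset V} (hS : IsNormSystem m ((↑) : S → V)) :
      S.card ≤ (Module.finrank ℝ V + 2 * m).choose (2 * m) := by
    rw [← Fintype.card_coe]
    refine hS.card_le_choose_of_lt_inner _ fun x y => ?_
    have h := (abs_le.1 (abs_real_inner_le_norm (x : V) y)).1
    rw [hS.norm_eq, hS.norm_eq, Real.mul_self_sqrt m.cast_nonneg] at h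
    push_cast
    linarith
  obtain ⟨S, ⟨hvS, hS⟩, hmax⟩ := (measure fun S : Finset V =>
      (Module.finrank ℝ V + 2 * m).choose (2 * m) - S.card).wf.has_min
    {S | (∀ i, v i ∈ S) ∧ IsNormSystem m ((↑) : S → V)} ⟨_, by simp, hrange⟩
  refine ⟨S, hvS, hS, fun x hx hxS => by_contra fun hmem => ?_⟩
  refine hmax (insert x S) ⟨fun i => Finset.mem_insert_of_mem (hvS i), hS.finset_insert hx hxS⟩ ?_
  have hcard := hbound (hS.finset_insert hx hxS)
  rw [Finset.card_insert_of_notMem hmem] at hcard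
  change _ - (insert x S).card < _ - S.card
  rw [Finset.card_insert_of_notMem hmem]
  exact Nat.sub_lt_sub_left (by omega) (Nat.lt_succ_self _)

end IsNormSystem

lemma card_le_two_mul_card_of_mem_or_sub_mem {G : Type*} [AddCommGroup G] {a : G} {A N : Finset G}
    (h : ∀ g ∈ N, g ∈ A ∨ a - g ∈ A) : N.card ≤ 2 * A.card := by
  classical
  have hsub : N ⊆ A ∪ A.image (a - ·) := fun g hg => by
    rcases h g hg with h | h
    · exact Finset.mem_union_left _ h
    · exact Finset.mem_union_right _ (Finset.mem_image.2 ⟨_, h, sub_sub_cancel a g⟩)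
  calc N.card ≤ (A ∪ A.image (a - ·)).card := Finset.card_le_card hsub
    _ ≤ A.card + (A.image (a - ·)).card := Finset.card_union_le _ _
    _ ≤ 2 * A.card := by linarith [Finset.card_image_le (s := A) (f := (a - ·))]

section RootSystems

open scoped RealInnerProductSpace

variable {V : Type*} [NormedAddCommGroup V] [InnerProductSpace ℝ V]

/-- A simply laced root system, normalized so that roots have squared norm `2`. -/
structure IsRootSystem (Φ : Finset V) : Prop where
  inner_self : ∀ {α}, α ∈ Φ → ⟪α, α⟫ = 2
  exists_int : ∀ {α β}, α ∈ Φ → β ∈ Φ → ∃ t : ℤ, ⟪α, β⟫ = (t : ℝ)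
  neg_mem : ∀ {α}, α ∈ Φ → -α ∈ Φ
  sub_mem : ∀ {α β}, α ∈ Φ → β ∈ Φ → ⟪α, β⟫ = 1 → α - β ∈ Φ

open Classical in
/-- The vectors of `Φ` having inner product `1` with `α`; for a root system, the roots at angle
`π / 3` from the root `α`. -/
noncomputable def sixtyDegree (Φ : Finset V) (α : V) : Finset V := {γ ∈ Φ | ⟪α, γ⟫ = 1}

/-- Four pairwise orthogonal roots at angle `π / 3` from `α` which add up to `2 α`. -/
structure IsOrthoFrame (Φ : Finset V) (α : V) (b : Fin 4 → V) : Prop where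
  mem : ∀ i, b i ∈ sixtyDegree Φ α
  orthogonal : Pairwise fun i j => ⟪b i, b j⟫ = 0
  sum_eq : ∑ i, b i = (2 : ℝ) • α

open Classical in
/-- The pillar of index `j` over the frame `b`, after Lemmens and Seidel: the roots at angle
`π / 3` from `α` whose inner products with the frame are `1` at the indices `0`, `j` and `0`
elsewhere. -/
noncomputable def pillar (Φ : Finset V) (α : V) (b : Fin 4 → V) (j : Fin 4) : Finset V :=
  {γ ∈ sixtyDegree Φ α | ∀ i, ⟪γ, b i⟫ = if i = 0 ∨ i = j then 1 else 0}

variable {Φ : Finset V} {α : V}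

lemma mem_sixtyDegree {γ : V} : γ ∈ sixtyDegree Φ α ↔ γ ∈ Φ ∧ ⟪α, γ⟫ = 1 := by
  simp [sixtyDegree]

lemma mem_pillar {b : Fin 4 → V} {j : Fin 4} {γ : V} : γ ∈ pillar Φ α b j ↔
    γ ∈ sixtyDegree Φ α ∧ ∀ i, ⟪γ, b i⟫ = if i = 0 ∨ i = j then 1 else 0 := by
  simp [pillar]

theorem IsNormSystem.exists_isRootSystem [FiniteDimensional ℝ V] {ι : Type*} [Finite ι]
    {v : ι → V} (hv : IsNormSystem 2 v) : ∃ Φ : Finset V, IsRootSystem Φ ∧ ∀ i, v i ∈ Φ := by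
  obtain ⟨Φ, hvΦ, hΦ, hmax⟩ := hv.exists_maximal
  have hself {α : V} (hα : α ∈ Φ) : ⟪α, α⟫ = 2 := hΦ.inner_self ⟨α, hα⟩
  have hint {α β : V} (hα : α ∈ Φ) (hβ : β ∈ Φ) : ∃ t : ℤ, ⟪α, β⟫ = (t : ℝ) :=
    hΦ.exists_int ⟨α, hα⟩ ⟨β, hβ⟩
  refine ⟨Φ, ⟨hself, hint, fun {α} hα => ?_, fun {α β} hα hβ hαβ => ?_⟩, hvΦ⟩
  · refine hmax _ (by rw [inner_neg_neg, hself hα, Nat.cast_ofNat]) fun γ hγ => ?_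
    obtain ⟨t, ht⟩ := hint hα hγ
    exact ⟨-t, by rw [inner_neg_left, ht, Int.cast_neg]⟩
  · refine hmax _ ?_ fun γ hγ => ?_
    · simp only [inner_sub_left, inner_sub_right, hself hα, hself hβ, real_inner_comm α β, hαβ]
      norm_num
    · obtain ⟨s, hs⟩ := hint hα hγ
      obtain ⟨t, ht⟩ := hint hβ hγ
      exact ⟨s - t, by rw [inner_sub_left, hs, ht, Int.cast_sub]⟩

namespace IsRootSystem

lemma norm_sq (h : IsRootSystem Φ) (hα : α ∈ Φ) : ‖α‖ ^ 2 = 2 := by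
  rw [← real_inner_self_eq_norm_sq, h.inner_self hα]

lemma eq_of_inner_eq_two (h : IsRootSystem Φ) {β : V} (hα : α ∈ Φ) (hβ : β ∈ Φ)
    (hαβ : ⟪α, β⟫ = 2) : α = β := by
  rw [← sub_eq_zero, ← norm_eq_zero, ← sq_eq_zero_iff, norm_sub_sq_real, h.norm_sq hα,
    h.norm_sq hβ, hαβ]
  norm_num

lemma inner_cases (h : IsRootSystem Φ) {β : V} (hα : α ∈ Φ) (hβ : β ∈ Φ) :
    β = α ∨ β = -α ∨ ⟪α, β⟫ = 1 ∨ ⟪α, β⟫ = 0 ∨ ⟪α, β⟫ = -1 := by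
  obtain ⟨t, ht⟩ := h.exists_int hα hβ
  have habs : |(t : ℝ)| ≤ 2 := by
    have hCS := real_inner_mul_inner_self_le α β
    rw [h.inner_self hα, h.inner_self hβ, ht] at hCS
    exact abs_le_of_sq_le_sq (by linarith) zero_le_two
  obtain ⟨hl, hu⟩ : -2 ≤ t ∧ t ≤ 2 := abs_le.1 (by exact_mod_cast habs)
  interval_cases t <;> simp only [ht]
  · right; left
    have := h.eq_of_inner_eq_two (h.neg_mem hα) hβ (by rw [inner_neg_left, ht]; norm_num)
    exact this.symm
  · norm_num
  · norm_num
  · norm_num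
  · exact Or.inl (h.eq_of_inner_eq_two hα hβ (by rw [ht]; norm_num)).symm

lemma sub_mem_sixtyDegree (h : IsRootSystem Φ) (hα : α ∈ Φ) {γ : V}
    (hγ : γ ∈ sixtyDegree Φ α) : α - γ ∈ sixtyDegree Φ α := by
  rw [mem_sixtyDegree] at hγ ⊢
  exact ⟨h.sub_mem hα hγ.1 hγ.2, by rw [inner_sub_right, h.inner_self hα, hγ.2]; norm_num⟩

lemma inner_eq_one_or_zero (h : IsRootSystem Φ) (hα : α ∈ Φ) {γ δ : V}
    (hγ : γ ∈ sixtyDegree Φ α) (hδ : δ ∈ sixtyDegree Φ α) (hne : δ ≠ γ) (hsub : δ ≠ α - γ) :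
    ⟪γ, δ⟫ = 1 ∨ ⟪γ, δ⟫ = 0 := by
  have hδ' := mem_sixtyDegree.1 (h.sub_mem_sixtyDegree hα hδ)
  rw [mem_sixtyDegree] at hγ hδ
  rcases h.inner_cases hγ.1 hδ.1 with rfl | rfl | h1 | h0 | hm
  · exact absurd rfl hne
  · rw [inner_neg_right, hγ.2] at hδ; norm_num at hδ
  · exact Or.inl h1
  · exact Or.inr h0
  · refine absurd ?_ hsub
    rw [h.eq_of_inner_eq_two hγ.1 hδ'.1 ?_, sub_sub_cancel]
    rw [inner_sub_right, hm, real_inner_comm, hγ.2]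
    norm_num

lemma two_smul_sum_sixtyDegree (h : IsRootSystem Φ) (hα : α ∈ Φ) :
    (2 : ℝ) • ∑ γ ∈ sixtyDegree Φ α, γ = ((sixtyDegree Φ α).card : ℝ) • α := by
  have hflip : ∑ γ ∈ sixtyDegree Φ α, (α - γ) = ∑ γ ∈ sixtyDegree Φ α, γ :=
    Finset.sum_nbij' (α - ·) (α - ·) (fun γ => h.sub_mem_sixtyDegree hα)
      (fun γ => h.sub_mem_sixtyDegree hα) (by simp) (by simp) (by simp)
  rw [Finset.sum_sub_distrib, Finset.sum_const, sub_eq_iff_eq_add, ← two_smul ℝ] at hflip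
  rw [← hflip, Nat.cast_smul_eq_nsmul]

lemma sum_inner_smul (h : IsRootSystem Φ) (hα : α ∈ Φ) :
    ∑ β ∈ Φ, ⟪β, α⟫ • β = (4 + ((sixtyDegree Φ α).card : ℝ)) • α := by
  classical
  have hpos : {β ∈ Φ | 0 < ⟪β, α⟫} = insert α (sixtyDegree Φ α) := by
    ext β
    simp only [Finset.mem_filter, Finset.mem_insert, mem_sixtyDegree, real_inner_comm α β]
    constructor
    · rintro ⟨hβ, h0⟩
      rcases h.inner_cases hα hβ with rfl | rfl | h1 | h1 | h1 <;>
        simp_all [inner_neg_right] <;> linarith [h.norm_sq hα]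
    · rintro (rfl | ⟨hβ, h1⟩)
      · exact ⟨hα, by rw [h.inner_self hα]; norm_num⟩
      · exact ⟨hβ, by rw [h1]; norm_num⟩
  have hneg : ∑ β ∈ Φ with ⟪β, α⟫ < 0, ⟪β, α⟫ • β = ∑ β ∈ Φ with 0 < ⟪β, α⟫, ⟪β, α⟫ • β :=
    Finset.sum_nbij' (-·) (-·) (by simp +contextual [h.neg_mem]) (by simp +contextual [h.neg_mem])
      (by simp) (by simp) (by simp)
  have hnonpos : ∑ β ∈ Φ with ¬ 0 < ⟪β, α⟫, ⟪β, α⟫ • β = ∑ β ∈ Φ with ⟪β, α⟫ < 0, ⟪β, α⟫ • β := by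
    refine (Finset.sum_subset (fun β => ?_) fun β hβ hβ' => ?_).symm
    · simp only [Finset.mem_filter, not_lt]; exact fun hβ => ⟨hβ.1, hβ.2.le⟩
    · simp only [Finset.mem_filter, not_and, not_lt] at hβ hβ'
      rw [le_antisymm hβ.2 (hβ' hβ.1), zero_smul]
  have hone : ∀ γ ∈ sixtyDegree Φ α, ⟪γ, α⟫ • γ = γ := fun γ hγ => by
    rw [real_inner_comm, (mem_sixtyDegree.1 hγ).2, one_smul]
  rw [← Finset.sum_filter_add_sum_filter_not Φ (fun β => 0 < ⟪β, α⟫), hnonpos, hneg, hpos,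
    Finset.sum_insert (by simp [mem_sixtyDegree, h.norm_sq hα]), h.inner_self hα,
    Finset.sum_congr rfl hone, ← two_smul ℝ, smul_add, h.two_smul_sum_sixtyDegree hα]
  module

theorem two_mul_card_le [FiniteDimensional ℝ V] (h : IsRootSystem Φ) {c : ℕ}
    (hc : ∀ α ∈ Φ, 4 + (sixtyDegree Φ α).card ≤ c) :
    2 * Φ.card ≤ c * Module.finrank ℝ V := by
  have hle := sum_norm_sq_le_mul_finrank ((↑) : Φ → V) fun x =>
    sum_inner_sq_le_of_eigenvector ((↑) : Φ → V) c.cast_nonneg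
      (fun α => 4 + ((sixtyDegree Φ α.1).card : ℝ)) (fun α => by exact_mod_cast hc α α.2)
      (fun α => by rw [← h.sum_inner_smul α.2, Finset.sum_coe_sort Φ fun β => ⟪β, α.1⟫ • β]) x
  rw [Finset.sum_congr rfl fun β _ => h.norm_sq β.2, Finset.sum_const, Finset.card_univ,
    Fintype.card_coe, nsmul_eq_mul] at hle
  rw [mul_comm]
  exact_mod_cast hle

end IsRootSystem

section Pillars

variable {b : Fin 4 → V}

lemma IsRootSystem.card_sixtyDegree_le_of_no_orthogonal_triple [FiniteDimensional ℝ V]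
    (h : IsRootSystem Φ) (hα : α ∈ Φ)
    (htriple : ∀ β ∈ sixtyDegree Φ α, ∀ γ ∈ sixtyDegree Φ α, ∀ δ ∈ sixtyDegree Φ α,
      ⟪β, γ⟫ = 0 → ⟪β, δ⟫ = 0 → ⟪γ, δ⟫ ≠ 0) :
    (sixtyDegree Φ α).card ≤ 2 * Module.finrank ℝ V + 4 := by
  classical
  rcases (sixtyDegree Φ α).eq_empty_or_nonempty with hempty | ⟨β, hβ⟩
  · simp [hempty]
  have hβ' := mem_sixtyDegree.1 hβ
  set B := {γ ∈ sixtyDegree Φ α | ⟪β, γ⟫ = 0} with hB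
  have hBcard : B.card ≤ Module.finrank ℝ V + 1 := by
    have hcode := card_le_choose_of_inner_mem ((↑) : B → V) {1} ?_ ?_
    · simpa using hcode
    · rintro ⟨γ, hγ⟩
      rw [hB, Finset.mem_filter, mem_sixtyDegree] at hγ
      simp [h.norm_sq hγ.1.1]
    · rintro ⟨γ, hγ⟩ ⟨δ, hδ⟩ hne
      obtain ⟨hγN, hγβ⟩ := Finset.mem_filter.1 hγ
      obtain ⟨hδN, hδβ⟩ := Finset.mem_filter.1 hδ
      refine Finset.mem_singleton.2 ((h.inner_eq_one_or_zero hα hδN hγN ?_ ?_).resolve_right ?_)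
      · simpa using hne
      · rintro rfl
        rw [inner_sub_right, real_inner_comm, hβ'.2, hδβ] at hγβ
        norm_num at hγβ
      · exact htriple β hβ δ hδN γ hγN hδβ hγβ
  have hcover : ∀ γ ∈ sixtyDegree Φ α, γ ∈ insert β B ∨ α - γ ∈ insert β B := fun γ hγ => by
    simp only [Finset.mem_insert, hB, Finset.mem_filter, hγ, h.sub_mem_sixtyDegree hα hγ,
      true_and, inner_sub_right, real_inner_comm α β, hβ'.2, sub_eq_zero]
    by_cases hγβ : γ = β
    · exact Or.inl (Or.inl hγβ)
    by_cases hγβ' : γ = α - β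
    · exact Or.inr (Or.inl (by rw [hγβ', sub_sub_cancel]))
    rcases h.inner_eq_one_or_zero hα hβ hγ hγβ hγβ' with h1 | h0
    · exact Or.inr (Or.inr h1.symm)
    · exact Or.inl (Or.inr h0)
  calc (sixtyDegree Φ α).card ≤ 2 * (insert β B).card :=
        card_le_two_mul_card_of_mem_or_sub_mem hcover
    _ ≤ 2 * (B.card + 1) := Nat.mul_le_mul_left 2 (Finset.card_insert_le _ _)
    _ ≤ 2 * Module.finrank ℝ V + 4 := by omega

lemma IsRootSystem.exists_isOrthoFrame (h : IsRootSystem Φ) (hα : α ∈ Φ) {β γ δ : V}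
    (hβ : β ∈ sixtyDegree Φ α) (hγ : γ ∈ sixtyDegree Φ α) (hδ : δ ∈ sixtyDegree Φ α)
    (hβγ : ⟪β, γ⟫ = 0) (hβδ : ⟪β, δ⟫ = 0) (hγδ : ⟪γ, δ⟫ = 0) :
    ∃ b, IsOrthoFrame Φ α b := by
  obtain ⟨hβΦ, hαβ⟩ := mem_sixtyDegree.1 hβ
  obtain ⟨hγΦ, hαγ⟩ := mem_sixtyDegree.1 hγ
  obtain ⟨hδΦ, hαδ⟩ := mem_sixtyDegree.1 hδ
  have hαβγ : α - β - γ ∈ Φ := h.sub_mem (h.sub_mem hα hβΦ hαβ) hγΦ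
    (by rw [inner_sub_left, hαγ, hβγ, sub_zero])
  have hfourth : (2 : ℝ) • α - β - γ - δ ∈ Φ := by
    have hsum : α - δ - -(α - β - γ) ∈ Φ := by
      refine h.sub_mem (h.sub_mem hα hδΦ hαδ) (h.neg_mem hαβγ) ?_
      simp only [inner_neg_right, inner_sub_left, inner_sub_right, h.inner_self hα, hαβ, hαγ,
        real_inner_comm α δ, real_inner_comm β δ, real_inner_comm γ δ, hαδ, hβδ, hγδ]
      norm_num
    convert hsum using 1
    module
  refine ⟨![β, γ, δ, (2 : ℝ) • α - β - γ - δ], ⟨?_, ?_, ?_⟩⟩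
  · have hαfourth : ⟪α, (2 : ℝ) • α - β - γ - δ⟫ = 1 := by
      simp only [inner_sub_right, real_inner_smul_right, h.inner_self hα, hαβ, hαγ, hαδ]
      norm_num
    simp [Fin.forall_fin_succ, hβ, hγ, hδ, mem_sixtyDegree.2 ⟨hfourth, hαfourth⟩]
  · intro i j hij
    wlog hlt : i < j generalizing i j
    · exact inner_eq_zero_symm.1 (this hij.symm (lt_of_le_of_ne (not_lt.1 hlt) hij.symm))
    fin_cases i <;> fin_cases j <;> simp_all [inner_sub_right, real_inner_smul_right,
      real_inner_comm, h.norm_sq]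
  · simp only [Fin.sum_univ_four, Matrix.cons_val]
    module

namespace IsOrthoFrame

lemma mem_root (hb : IsOrthoFrame Φ α b) (i : Fin 4) : b i ∈ Φ := (mem_sixtyDegree.1 (hb.mem i)).1

lemma inner_right (hb : IsOrthoFrame Φ α b) (i : Fin 4) : ⟪α, b i⟫ = 1 :=
  (mem_sixtyDegree.1 (hb.mem i)).2

lemma inner_eq (hb : IsOrthoFrame Φ α b) (hΦ : IsRootSystem Φ) (i j : Fin 4) :
    ⟪b i, b j⟫ = if i = j then 2 else 0 := by
  split_ifs with hij
  · rw [hij, hΦ.inner_self (hb.mem_root j)]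
  · exact hb.orthogonal hij

lemma sum_inner (hb : IsOrthoFrame Φ α b) {γ : V} (hγ : γ ∈ sixtyDegree Φ α) :
    ∑ i, ⟪γ, b i⟫ = 2 := by
  rw [← inner_sum, hb.sum_eq, real_inner_smul_right, real_inner_comm, (mem_sixtyDegree.1 hγ).2,
    mul_one]

lemma exists_mem_pillar (hb : IsOrthoFrame Φ α b) {γ : V} (hγ : γ ∈ sixtyDegree Φ α)
    (hγb : ∀ i, ⟪γ, b i⟫ = 1 ∨ ⟪γ, b i⟫ = 0) (h0 : ⟪γ, b 0⟫ = 1) :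
    ∃ j ≠ 0, γ ∈ pillar Φ α b j := by
  have hsum := hb.sum_inner hγ
  rw [Fin.sum_univ_four] at hsum
  simp only [mem_pillar, hγ, true_and]
  rcases hγb 1 with h1 | h1 <;> rcases hγb 2 with h2 | h2 <;> rcases hγb 3 with h3 | h3 <;>
    try linarith
  · exact ⟨1, by decide, by simp [Fin.forall_fin_succ, *]⟩
  · exact ⟨2, by decide, by simp [Fin.forall_fin_succ, *]⟩
  · exact ⟨3, by decide, by simp [Fin.forall_fin_succ, *]⟩

lemma mem_range_or_exists_mem_pillar (hb : IsOrthoFrame Φ α b) (hΦ : IsRootSystem Φ) (hα : α ∈ Φ)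
    {γ : V} (hγ : γ ∈ sixtyDegree Φ α) :
    (γ ∈ Set.range b ∨ ∃ j ≠ 0, γ ∈ pillar Φ α b j) ∨
      (α - γ ∈ Set.range b ∨ ∃ j ≠ 0, α - γ ∈ pillar Φ α b j) := by
  by_cases hγb : γ ∈ Set.range b
  · exact Or.inl (Or.inl hγb)
  by_cases hγb' : α - γ ∈ Set.range b
  · exact Or.inr (Or.inl hγb')
  have hinner (i : Fin 4) : ⟪γ, b i⟫ = 1 ∨ ⟪γ, b i⟫ = 0 :=
    hΦ.inner_eq_one_or_zero hα hγ (hb.mem i) (fun h => hγb ⟨i, h⟩) fun h => hγb' ⟨i, h⟩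
  rcases hinner 0 with h0 | h0
  · exact Or.inl (Or.inr (hb.exists_mem_pillar hγ hinner h0))
  · refine Or.inr (Or.inr (hb.exists_mem_pillar (hΦ.sub_mem_sixtyDegree hα hγ) (fun i => ?_) ?_))
    · rw [inner_sub_left, hb.inner_right]
      rcases hinner i with hi | hi <;> simp [hi]
    · rw [inner_sub_left, hb.inner_right, h0, sub_zero]

lemma card_sixtyDegree_le (hb : IsOrthoFrame Φ α b) (hΦ : IsRootSystem Φ) (hα : α ∈ Φ) :
    (sixtyDegree Φ α).card ≤ 2 * (4 + ((pillar Φ α b 1).card + (pillar Φ α b 2).card +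
      (pillar Φ α b 3).card)) := by
  classical
  let A := Finset.univ.image b ∪ (Finset.univ.erase 0).biUnion (pillar Φ α b)
  have hA : ∀ γ ∈ sixtyDegree Φ α, γ ∈ A ∨ α - γ ∈ A := fun γ hγ => by
    simpa [A] using hb.mem_range_or_exists_mem_pillar hΦ hα hγ
  refine (card_le_two_mul_card_of_mem_or_sub_mem hA).trans (Nat.mul_le_mul_left 2 ?_)
  have himage : (Finset.univ.image b).card ≤ 4 := Finset.card_image_le
  have hunion : ((Finset.univ.erase 0).biUnion (pillar Φ α b)).card ≤
      ∑ j ∈ Finset.univ.erase (0 : Fin 4), (pillar Φ α b j).card := Finset.card_biUnion_le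
  have hsum : ∑ j ∈ Finset.univ.erase (0 : Fin 4), (pillar Φ α b j).card =
      (pillar Φ α b 1).card + (pillar Φ α b 2).card + (pillar Φ α b 3).card := by
    rw [show Finset.univ.erase (0 : Fin 4) = {1, 2, 3} by decide]
    simp [add_assoc]
  exact (Finset.card_union_le _ _).trans (by omega)

end IsOrthoFrame

/-- The component of a root of the pillar of index `j` orthogonal to the frame. -/
noncomputable def pillarRest (b : Fin 4 → V) (j : Fin 4) (γ : V) : V :=
  γ - (1 / 2 : ℝ) • (b 0 + b j)

namespace IsOrthoFrame

variable {j k : Fin 4} {γ δ : V}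

lemma inner_pillarRest (hb : IsOrthoFrame Φ α b) (hΦ : IsRootSystem Φ) (hj : j ≠ 0)
    (hγ : γ ∈ pillar Φ α b j) (i : Fin 4) :
    ⟪pillarRest b j γ, b i⟫ = 0 := by
  rw [pillarRest, inner_sub_left, real_inner_smul_left, inner_add_left, hb.inner_eq hΦ,
    hb.inner_eq hΦ, (mem_pillar.1 hγ).2]
  rcases eq_or_ne i 0 with rfl | hi0
  · simp [hj]
  · rcases eq_or_ne i j with rfl | hij
    · simp [hi0.symm]
    · simp [hi0, hij, hi0.symm, hij.symm]

lemma inner_pillarRest_pillarRest (hb : IsOrthoFrame Φ α b) (hΦ : IsRootSystem Φ) (hj : j ≠ 0)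
    (hγ : γ ∈ pillar Φ α b j) (hδ : δ ∈ pillar Φ α b k) :
    ⟪pillarRest b j γ, pillarRest b k δ⟫ = ⟪γ, δ⟫ - if j = k then 1 else 1 / 2 := by
  have hδb := (mem_pillar.1 hδ).2
  rw [pillarRest.eq_1 b k, inner_sub_right, real_inner_smul_right, inner_add_right,
    hb.inner_pillarRest hΦ hj hγ, hb.inner_pillarRest hΦ hj hγ, pillarRest, inner_sub_left,
    real_inner_smul_left, inner_add_left, real_inner_comm, real_inner_comm δ, real_inner_comm δ,
    hδb, hδb, real_inner_comm]
  simp only [true_or, if_true, hj, false_or]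
  split_ifs <;> norm_num

lemma norm_pillarRest (hb : IsOrthoFrame Φ α b) (hΦ : IsRootSystem Φ) (hj : j ≠ 0)
    (hγ : γ ∈ pillar Φ α b j) : ‖pillarRest b j γ‖ = 1 := by
  rw [← sq_eq_sq₀ (norm_nonneg _) zero_le_one, ← real_inner_self_eq_norm_sq,
    hb.inner_pillarRest_pillarRest hΦ hj hγ hγ, if_pos rfl,
    hΦ.inner_self (mem_sixtyDegree.1 (mem_pillar.1 hγ).1).1]
  norm_num

lemma ne_sub_of_mem_pillar (hb : IsOrthoFrame Φ α b) (hγ : γ ∈ pillar Φ α b j)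
    (hδ : δ ∈ pillar Φ α b k) : δ ≠ α - γ := by
  rintro rfl
  have h0 := (mem_pillar.1 hδ).2 0
  rw [inner_sub_left, hb.inner_right, (mem_pillar.1 hγ).2 0] at h0
  simp at h0

lemma inner_pillarRest_eq_zero_or_neg_one (hb : IsOrthoFrame Φ α b) (hΦ : IsRootSystem Φ)
    (hα : α ∈ Φ) (hj : j ≠ 0) (hγ : γ ∈ pillar Φ α b j) (hδ : δ ∈ pillar Φ α b j) (hne : γ ≠ δ) :
    ⟪pillarRest b j γ, pillarRest b j δ⟫ = 0 ∨ ⟪pillarRest b j γ, pillarRest b j δ⟫ = -1 := by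
  rw [hb.inner_pillarRest_pillarRest hΦ hj hγ hδ, if_pos rfl]
  rcases hΦ.inner_eq_one_or_zero hα (mem_pillar.1 hγ).1 (mem_pillar.1 hδ).1 hne.symm
    (hb.ne_sub_of_mem_pillar hγ hδ) with h | h <;> norm_num [h]

lemma inner_pillarRest_sq (hb : IsOrthoFrame Φ α b) (hΦ : IsRootSystem Φ) (hα : α ∈ Φ)
    (hj : j ≠ 0) (hjk : j ≠ k) (hγ : γ ∈ pillar Φ α b j) (hδ : δ ∈ pillar Φ α b k) :
    ⟪pillarRest b j γ, pillarRest b k δ⟫ ^ 2 = 1 / 4 := by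
  have hne : δ ≠ γ := by
    rintro rfl
    have h := (mem_pillar.1 hγ).2 j
    rw [(mem_pillar.1 hδ).2 j] at h
    simp [hj, hjk] at h
  rw [hb.inner_pillarRest_pillarRest hΦ hj hγ hδ, if_neg hjk]
  rcases hΦ.inner_eq_one_or_zero hα (mem_pillar.1 hγ).1 (mem_pillar.1 hδ).1 hne
    (hb.ne_sub_of_mem_pillar hγ hδ) with h | h <;> norm_num [h]

lemma card_pillar_le_eight (hb : IsOrthoFrame Φ α b) (hΦ : IsRootSystem Φ) (hα : α ∈ Φ)
    (hj : j ≠ 0) (hk : k ≠ 0) (hjk : j ≠ k) (hne : (pillar Φ α b k).Nonempty) :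
    (pillar Φ α b j).card ≤ 8 := by
  obtain ⟨δ, hδ⟩ := hne
  have h := sum_inner_sq_le_of_orthogonal_or_opposite
    (fun γ : pillar Φ α b j => pillarRest b j γ) (fun γ => hb.norm_pillarRest hΦ hj γ.2)
    (fun γ γ' hγγ' => hb.inner_pillarRest_eq_zero_or_neg_one hΦ hα hj γ.2 γ'.2
      (Subtype.coe_ne_coe.2 hγγ')) (pillarRest b k δ)
  rw [Finset.sum_congr rfl fun γ _ => hb.inner_pillarRest_sq hΦ hα hj hjk γ.2 hδ,
    hb.norm_pillarRest hΦ hk hδ, Finset.sum_const, Finset.card_univ, Fintype.card_coe,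
    nsmul_eq_mul] at h
  have hle : ((pillar Φ α b j).card : ℝ) ≤ 8 := by linarith
  exact_mod_cast hle

/- The vectors `± b i / √2` extend the projected pillar by four more orthogonal lines. -/
lemma card_pillar_add_eight_le [FiniteDimensional ℝ V] (hb : IsOrthoFrame Φ α b)
    (hΦ : IsRootSystem Φ) (hα : α ∈ Φ) (hj : j ≠ 0) :
    (pillar Φ α b j).card + 8 ≤ 2 * Module.finrank ℝ V := by
  let w : pillar Φ α b j ⊕ Fin 4 × ℤˣ → V :=
    Sum.elim (fun γ => pillarRest b j γ) fun p => ((p.2 : ℤ) / √2 : ℝ) • b p.1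
  have h := card_le_two_mul_finrank_of_orthogonal_or_opposite w ?_ ?_
  · simpa using h
  · rintro (γ | ⟨i, s⟩)
    · exact hb.norm_pillarRest hΦ hj γ.2
    · have hb2 : ‖b i‖ = √2 := by
        rw [norm_eq_sqrt_real_inner, hΦ.inner_self (hb.mem_root i)]
      rcases Int.units_eq_one_or s with rfl | rfl <;>
        simp [w, norm_smul, hb2, abs_of_nonneg]
  · rintro (γ | ⟨i, s⟩) (γ' | ⟨i', s'⟩) hne
    · exact hb.inner_pillarRest_eq_zero_or_neg_one hΦ hα hj γ.2 γ'.2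
        fun h => hne (congrArg Sum.inl (Subtype.ext h))
    · left
      simp [w, real_inner_smul_right, hb.inner_pillarRest hΦ hj γ.2]
    · left
      simp [w, real_inner_smul_left, inner_eq_zero_symm.1 (hb.inner_pillarRest hΦ hj γ'.2 i)]
    · simp only [w, Sum.elim_inr, real_inner_smul_left, real_inner_smul_right, hb.inner_eq hΦ]
      split_ifs with hi
      · right
        have hs : (s : ℤ) * (s' : ℤ) = -1 := by
          subst hi
          rcases Int.units_eq_one_or s with rfl | rfl <;>
            rcases Int.units_eq_one_or s' with rfl | rfl <;> simp at hne ⊢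
        have hs' : ((s : ℤ) : ℝ) * ((s' : ℤ) : ℝ) = -1 := by exact_mod_cast hs
        field_simp
        rw [Real.sq_sqrt zero_le_two]
        linarith
      · simp

lemma card_sixtyDegree_le_max [FiniteDimensional ℝ V] (hb : IsOrthoFrame Φ α b)
    (hΦ : IsRootSystem Φ) (hα : α ∈ Φ) :
    (sixtyDegree Φ α).card ≤ max 56 (4 * Module.finrank ℝ V - 8) := by
  have hN := hb.card_sixtyDegree_le hΦ hα
  have hdim (j : Fin 4) (hj : j ≠ 0) := hb.card_pillar_add_eight_le hΦ hα hj
  have height (j k : Fin 4) (hj : j ≠ 0) (hk : k ≠ 0) (hjk : j ≠ k) :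
      (pillar Φ α b j).card ≤ 8 ∨ (pillar Φ α b k).card = 0 := by
    rcases (pillar Φ α b k).eq_empty_or_nonempty with h | h
    · exact Or.inr (Finset.card_eq_zero.2 h)
    · exact Or.inl (hb.card_pillar_le_eight hΦ hα hj hk hjk h)
  have h1 := hdim 1 (by decide)
  have h2 := hdim 2 (by decide)
  have h3 := hdim 3 (by decide)
  have h12 := height 1 2 (by decide) (by decide) (by decide)
  have h13 := height 1 3 (by decide) (by decide) (by decide)
  have h21 := height 2 1 (by decide) (by decide) (by decide)
  have h23 := height 2 3 (by decide) (by decide) (by decide)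
  have h31 := height 3 1 (by decide) (by decide) (by decide)
  have h32 := height 3 2 (by decide) (by decide) (by decide)
  omega

end IsOrthoFrame

theorem IsRootSystem.card_sixtyDegree_le [FiniteDimensional ℝ V] (h : IsRootSystem Φ)
    (hα : α ∈ Φ) : (sixtyDegree Φ α).card ≤ max 56 (4 * Module.finrank ℝ V - 8) := by
  by_cases htriple : ∀ β ∈ sixtyDegree Φ α, ∀ γ ∈ sixtyDegree Φ α, ∀ δ ∈ sixtyDegree Φ α,
      ⟪β, γ⟫ = 0 → ⟪β, δ⟫ = 0 → ⟪γ, δ⟫ ≠ 0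
  · have hN := h.card_sixtyDegree_le_of_no_orthogonal_triple hα htriple
    omega
  · push Not at htriple
    obtain ⟨β, hβ, γ, hγ, δ, hδ, hβγ, hβδ, hγδ⟩ := htriple
    obtain ⟨b, hb⟩ := h.exists_isOrthoFrame hα hβ hγ hδ hβγ hβδ hγδ
    exact hb.card_sixtyDegree_le_max h hα

end Pillars

theorem IsRootSystem.card_le_max [FiniteDimensional ℝ V] (h : IsRootSystem Φ) :
    Φ.card ≤ max 480 (2 * Module.finrank ℝ V * (Module.finrank ℝ V - 1)) := by
  have hcard := h.two_mul_card_le (c := max 60 (4 * (Module.finrank ℝ V - 1))) fun α hα => by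
    have := h.card_sixtyDegree_le hα
    omega
  generalize Module.finrank ℝ V = n at hcard ⊢
  rcases le_total n 16 with hn | hn
  · rw [max_eq_left (by omega)] at hcard
    omega
  · rw [max_eq_right (by omega)] at hcard
    refine le_max_of_le_right ?_
    linarith [show 4 * (n - 1) * n = 2 * (2 * n * (n - 1)) by ring]

theorem IsNormSystem.two_mul_card_le [FiniteDimensional ℝ V] {ι : Type*} [Fintype ι] {v : ι → V}
    (hv : IsNormSystem 2 v) (hanti : ∀ i j, v i ≠ -v j) :
    2 * Fintype.card ι ≤ max 480 (2 * Module.finrank ℝ V * (Module.finrank ℝ V - 1)) := by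
  have hsymm := hv.symmetrize hanti
  obtain ⟨Φ, hΦ, hmem⟩ := hsymm.exists_isRootSystem
  have hinj : Function.Injective fun p : ι ⊕ ι => (⟨_, hmem p⟩ : Φ) :=
    fun p q hpq => hsymm.injective (congrArg Subtype.val hpq)
  calc 2 * Fintype.card ι = Fintype.card (ι ⊕ ι) := by rw [Fintype.card_sum, two_mul]
    _ ≤ Fintype.card Φ := Fintype.card_le_of_injective _ hinj
    _ = Φ.card := Fintype.card_coe Φ
    _ ≤ _ := hΦ.card_le_max

end RootSystems

section SplitSystems

variable {E F : Type*} [NormedAddCommGroup E] [InnerProductSpace ℝ E]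
  [NormedAddCommGroup F] [InnerProductSpace ℝ F]

/-- An antipode-free sequence `z 0, …, z (n - 1)` of norm `m` vectors of an integral lattice in an
orthogonal sum `E ⊕ F`, whose `E`-components are small at the beginning of the sequence. -/
structure IsSplitSystem (m : ℕ) {n : ℕ} (z : Fin n → WithLp 2 (E × F)) : Prop
    extends IsNormSystem m z where
  ne_neg : ∀ i j, z i ≠ -z j
  norm_fst_sq_le : ∀ r, ‖(z r).fst‖ ^ 2 ≤ m * (r + 1) / n

theorem IsNormSystem.card_le_one_add_sqrt_pow [FiniteDimensional ℝ E] {ι : Type*} [Fintype ι]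
    {m : ℕ} {v : ι → E} (hv : IsNormSystem m v) :
    (Fintype.card ι : ℝ) ≤ (1 + √2 * √m) ^ Module.finrank ℝ E := by
  have h := hv.card_le_choose_mul_pow (w := v) (τ := 0) (ρ := (√2)⁻¹) (k := 0)
    (fun i => (hv.norm_eq i).le) (fun i j => by simp) (by positivity) (by norm_num)
  simpa [mul_comm] using h

namespace IsSplitSystem

variable {m n : ℕ} {z : Fin n → WithLp 2 (E × F)}

open scoped RealInnerProductSpace in
lemma of_injective_norm_fst (hm : 1 ≤ m) (hself : ∀ i, ⟪z i, z i⟫ = m)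
    (hint : ∀ i j, ∃ t : ℤ, ⟪z i, z j⟫ = t) (hinj : Function.Injective fun i => ‖(z i).fst‖)
    (hle : ∀ r, ‖(z r).fst‖ ^ 2 ≤ m * (r + 1) / n) : IsSplitSystem m z where
  inner_self := hself
  exists_int := hint
  injective i j h := hinj (by simp only [h])
  ne_neg i j h := by
    obtain rfl : i = j := hinj (by simp only [h, WithLp.neg_fst, norm_neg])
    have hm0 : (0 : ℝ) < m := by exact_mod_cast hm
    have hneg : ⟪z i, z i⟫ = -⟪z i, z i⟫ :=
      (congrArg (⟪·, z i⟫) h).trans (inner_neg_left _ _)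
    linarith [hself i]
  norm_fst_sq_le := hle

variable [FiniteDimensional ℝ E] [FiniteDimensional ℝ F]

/- In the initial segment the `E`-components have squared norm at most `1 / a`, so distances are
essentially visible in `F`, whose dimension alone enters the packing bound. -/
lemma two_mul_le_choose_mul_pow (hz : IsSplitSystem m z) {a K k : ℕ} {ρ : ℝ} (ha : 1 ≤ a)
    (hK : K ≤ n) (hKn : a * m * K ≤ n) (hρ : 0 < ρ) (hk : 2 / (a : ℝ) + 2 * ρ ^ 2 ≤ k + 1) :
    2 * (K : ℝ) ≤ ((Module.finrank ℝ E + Module.finrank ℝ F + k).choose k : ℕ) *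
      (1 + √m / ρ) ^ Module.finrank ℝ F := by
  have hcomp := hz.toIsNormSystem.comp (Fin.castLE_injective hK)
  have hsymm := hcomp.symmetrize fun i j => hz.ne_neg _ _
  set v := Sum.elim (z ∘ Fin.castLE hK) fun i => -(z ∘ Fin.castLE hK) i
  have hfst (i : Fin K ⊕ Fin K) : ‖(v i).fst‖ ≤ 1 / √a := by
    have hr (r : Fin K) : ‖(z (Fin.castLE hK r)).fst‖ ≤ 1 / √a := by
      refine abs_le_of_sq_le_sq' ?_ (by positivity) |>.2
      have hn : (0 : ℝ) < n := by exact_mod_cast (r.pos.trans_le hK)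
      have hrK : (r : ℝ) + 1 ≤ K := by exact_mod_cast r.2
      have hKn' : (a * m * K : ℝ) ≤ n := by exact_mod_cast hKn
      rw [div_pow, Real.sq_sqrt a.cast_nonneg, one_pow]
      refine (hz.norm_fst_sq_le _).trans ?_
      rw [div_le_div_iff₀ hn (by positivity), one_mul]
      calc (m * ((Fin.castLE hK r : ℕ) + 1) * a : ℝ) ≤ m * K * a := by gcongr; exact hrK
        _ ≤ n := by linarith
    rcases i with r | r
    · exact hr r
    · simpa [v] using hr r
  have h := hsymm.card_le_choose_mul_pow (w := fun i => (v i).snd) (τ := 1 / a) (ρ := ρ) (k := k)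
    (fun i => ?_) (fun i j => ?_) hρ (by rwa [mul_one_div])
  · simpa [← two_mul, (WithLp.linearEquiv 2 ℝ (E × F)).finrank_eq] using h
  · rw [← hsymm.norm_eq i, WithLp.prod_norm_eq_of_L2]
    exact Real.le_sqrt_of_sq_le (by linarith [sq_nonneg ‖(v i).fst‖])
  · have hsub : ‖(v i).fst - (v j).fst‖ ≤ 2 * (1 / √a) :=
      (norm_sub_le _ _).trans (by linarith [hfst i, hfst j])
    have hsq := pow_le_pow_left₀ (norm_nonneg _) hsub 2
    rw [mul_pow, div_pow, Real.sq_sqrt a.cast_nonneg] at hsq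
    rw [WithLp.prod_norm_sq_eq_of_L2]
    simp only [WithLp.sub_fst, WithLp.sub_snd]
    linarith

theorem two_mul_le_mul_choose_mul_pow_add (hz : IsSplitSystem m z) (hm : 1 ≤ m) {a k : ℕ} {ρ : ℝ}
    (ha : 1 ≤ a) (hρ : 0 < ρ) (hk : 2 / (a : ℝ) + 2 * ρ ^ 2 ≤ k + 1) :
    2 * (n : ℝ) ≤ a * m * (((Module.finrank ℝ E + Module.finrank ℝ F + k).choose k : ℕ) *
      (1 + √m / ρ) ^ Module.finrank ℝ F + 2) := by
  have ham : 0 < a * m := Nat.mul_pos ha hm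
  have hK := hz.two_mul_le_choose_mul_pow (K := n / (a * m)) ha (Nat.div_le_self _ _)
    (Nat.mul_div_le _ _) hρ hk
  have hn : n ≤ a * m * (n / (a * m) + 1) := (Nat.lt_mul_div_succ n ham).le
  have hn' : (n : ℝ) ≤ a * m * ((n / (a * m) : ℕ) + 1) := by exact_mod_cast hn
  calc 2 * (n : ℝ) ≤ a * m * (2 * (n / (a * m) : ℕ) + 2) := by linarith
    _ ≤ _ := by gcongr

end IsSplitSystem

end SplitSystems

section UnitBallVolume

/-- The volume `π^{j/2} / Γ(j/2 + 1)` of the unit ball of `ℝ^j`. -/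
noncomputable def unitBallVolume (j : ℕ) : ℝ :=
  Real.pi ^ ((j : ℝ) / 2) / Real.Gamma ((j : ℝ) / 2 + 1)

lemma unitBallVolume_pos (j : ℕ) : 0 < unitBallVolume j :=
  div_pos (by positivity) (Real.Gamma_pos_of_pos (by positivity))

lemma unitBallVolume_zero : unitBallVolume 0 = 1 := by simp [unitBallVolume]

lemma unitBallVolume_one : unitBallVolume 1 = 2 := by
  have hΓ : Real.Gamma ((1 : ℝ) / 2 + 1) = 1 / 2 * √Real.pi := by
    rw [Real.Gamma_add_one (by norm_num), Real.Gamma_one_half_eq]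
  have hpi : √Real.pi ≠ 0 := by positivity
  rw [unitBallVolume, Nat.cast_one, hΓ, ← Real.sqrt_eq_rpow]
  field_simp

lemma unitBallVolume_add_two (j : ℕ) :
    unitBallVolume (j + 2) = unitBallVolume j * (2 * Real.pi / (j + 2)) := by
  have hj : (0 : ℝ) < (j : ℝ) / 2 + 1 := by positivity
  have hcast : ((j + 2 : ℕ) : ℝ) / 2 = (j : ℝ) / 2 + 1 := by push_cast; ring
  have := (Real.Gamma_pos_of_pos hj).ne'
  rw [unitBallVolume, unitBallVolume, hcast, Real.Gamma_add_one hj.ne',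
    Real.rpow_add Real.pi_pos, Real.rpow_one]
  field_simp

lemma le_unitBallVolume_mul_doubleFactorial (j : ℕ) :
    ((1 + j % 2 : ℕ) : ℝ) * (157 / 25) ^ (j / 2) ≤ unitBallVolume j * (j.doubleFactorial : ℝ) := by
  induction j using Nat.twoStepInduction with
  | zero => simp [unitBallVolume_zero]
  | one => norm_num [unitBallVolume_one]
  | more j ih _ =>
    have hpi : (157 / 25 : ℝ) ≤ 2 * Real.pi := by linarith [Real.pi_gt_d2]
    rw [unitBallVolume_add_two, Nat.doubleFactorial_add_two, Nat.add_mod_right,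
      Nat.add_div_right _ (by norm_num)]
    calc ((1 + j % 2 : ℕ) : ℝ) * (157 / 25) ^ (j / 2).succ
        = ((1 + j % 2 : ℕ) : ℝ) * (157 / 25) ^ (j / 2) * (157 / 25) := by rw [pow_succ, mul_assoc]
      _ ≤ unitBallVolume j * (j.doubleFactorial : ℝ) * (2 * Real.pi) :=
        mul_le_mul ih hpi (by norm_num) (mul_nonneg (unitBallVolume_pos j).le (Nat.cast_nonneg _))
      _ = unitBallVolume j * (2 * Real.pi / (j + 2)) *
          (((j + 2) * j.doubleFactorial : ℕ) : ℝ) := by push_cast; field_simp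

lemma unitBallVolume_mul_le_sq (j : ℕ) :
    unitBallVolume j * unitBallVolume (j + 2) ≤ unitBallVolume (j + 1) ^ 2 := by
  set s : ℝ := (j : ℝ) / 2 + 1 with hs
  have hs0 : 0 < s := by positivity
  have h1 : ((j + 1 : ℕ) : ℝ) / 2 + 1 = 1 / 2 * s + 1 / 2 * (s + 1) := by rw [hs]; push_cast; ring
  have h2 : ((j + 2 : ℕ) : ℝ) / 2 + 1 = s + 1 := by rw [hs]; push_cast; ring
  have hΓ : Real.Gamma (1 / 2 * s + 1 / 2 * (s + 1)) ^ 2 ≤ Real.Gamma s * Real.Gamma (s + 1) := by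
    have hle := Real.Gamma_mul_add_mul_le_rpow_Gamma_mul_rpow_Gamma hs0 (by linarith : 0 < s + 1)
      one_half_pos one_half_pos (by norm_num)
    have hΓs := (Real.Gamma_pos_of_pos hs0).le
    have hΓs1 := (Real.Gamma_pos_of_pos (by linarith : 0 < s + 1)).le
    rw [← Real.mul_rpow hΓs hΓs1, ← Real.sqrt_eq_rpow] at hle
    refine (Real.le_sqrt (Real.Gamma_pos_of_pos (by positivity)).le ?_).1 hle
    exact mul_nonneg hΓs hΓs1
  have hpi : Real.pi ^ ((j : ℝ) / 2) * Real.pi ^ (((j + 2 : ℕ) : ℝ) / 2) =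
      (Real.pi ^ (((j + 1 : ℕ) : ℝ) / 2)) ^ 2 := by
    rw [← Real.rpow_add Real.pi_pos, ← Real.rpow_mul_natCast Real.pi_pos.le]
    push_cast
    ring_nf
  rw [unitBallVolume, unitBallVolume, unitBallVolume, div_mul_div_comm, div_pow, hpi, h1, h2]
  gcongr

lemma sq_mul_two_pi_div_le_unitBallVolume_sq (j : ℕ) :
    unitBallVolume j ^ 2 * (2 * Real.pi / (j + 2)) ≤ unitBallVolume (j + 1) ^ 2 := by
  have h := unitBallVolume_mul_le_sq j
  rwa [unitBallVolume_add_two, ← mul_assoc, ← sq] at h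

lemma exp_one_mul_le_one_add_inv_pow {m : ℕ} (hm : 1 ≤ m) :
    Real.exp 1 * (2 * m / (2 * m + 1)) ≤ (1 + 1 / (m : ℝ)) ^ m := by
  have : (0 : ℝ) < m := by exact_mod_cast hm
  have hlog := Real.le_log_one_add_of_nonneg (x := 1 / (m : ℝ)) (by positivity)
  calc Real.exp 1 * (2 * m / (2 * m + 1))
      = Real.exp 1 * (-(1 / (2 * m + 1)) + 1) := by congr 1; field_simp; ring
    _ ≤ Real.exp 1 * Real.exp (-(1 / (2 * m + 1))) := by gcongr; exact Real.add_one_le_exp _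
    _ = Real.exp (m * (2 * (1 / m) / (1 / m + 2))) := by
      rw [← Real.exp_add]; congr 1; field_simp; ring
    _ ≤ Real.exp (m * Real.log (1 + 1 / m)) := by gcongr
    _ = (1 + 1 / (m : ℝ)) ^ m := by
      rw [← Real.log_pow, Real.exp_log (by positivity)]

lemma four_mul_two_mul_sub_one_sq_le {m : ℕ} (hm : 1 ≤ m) :
    4 * (2 * (m : ℝ) - 1) ^ 2 * (m + 2) ≤
      2 * Real.pi * m ^ 2 * (m + 1) * (1 + 1 / (m : ℝ)) ^ m := by
  have hm1 : (1 : ℝ) ≤ m := by exact_mod_cast hm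
  have hpe : (8.53 : ℝ) ≤ Real.pi * Real.exp 1 := by
    have := mul_le_mul Real.pi_gt_d2.le Real.exp_one_gt_d9.le (by norm_num) Real.pi_pos.le
    linarith
  refine le_trans ?_ (mul_le_mul_of_nonneg_left (exp_one_mul_le_one_add_inv_pow hm)
    (by positivity))
  have hrw : 2 * Real.pi * (m : ℝ) ^ 2 * (m + 1) * (Real.exp 1 * (2 * m / (2 * m + 1))) =
      Real.pi * Real.exp 1 * (4 * m ^ 3 * (m + 1) / (2 * m + 1)) := by ring
  rw [hrw]
  refine le_trans ?_ (mul_le_mul_of_nonneg_right hpe (by positivity))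
  rw [mul_div_assoc', le_div_iff₀ (by positivity)]
  nlinarith [mul_nonneg (sq_nonneg (m : ℝ)) (sq_nonneg ((m : ℝ) - 3.3)), sq_nonneg (m : ℝ)]

lemma sq_mul_pow_le_two_pi_div_mul_pow (n : ℕ) :
    (2 * (2 * n + 1) / (n + 1) : ℝ) ^ 2 * (n + 1) ^ (n + 1) ≤
      2 * Real.pi / (n + 3) * (n + 2 : ℝ) ^ (n + 2) := by
  have h := four_mul_two_mul_sub_one_sq_le (Nat.le_add_left 1 n)
  push_cast at h
  have hpow : (1 + 1 / ((n : ℝ) + 1)) ^ (n + 1) = (n + 2 : ℝ) ^ (n + 1) / (n + 1) ^ (n + 1) := by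
    rw [← div_pow]
    congr 1
    field_simp
    ring
  rw [hpow, mul_div_assoc', le_div_iff₀ (by positivity)] at h
  rw [div_pow, div_mul_eq_mul_div, div_mul_eq_mul_div,
    div_le_div_iff₀ (by positivity) (by positivity), pow_succ _ (n + 1)]
  convert h using 1 <;> ring

theorem two_mul_centralBinom_le_unitBallVolume_mul (n : ℕ) :
    2 * (n.centralBinom : ℝ) ≤ unitBallVolume (n + 1) * √(n + 1 : ℝ) ^ (n + 1) := by
  have hsq (n : ℕ) : (unitBallVolume (n + 1) * √(n + 1 : ℝ) ^ (n + 1)) ^ 2 =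
      unitBallVolume (n + 1) ^ 2 * (n + 1 : ℝ) ^ (n + 1) := by
    rw [mul_pow, ← pow_mul, mul_comm _ 2, pow_mul, Real.sq_sqrt (by positivity)]
  refine abs_le_of_sq_le_sq' ?_ (mul_nonneg (unitBallVolume_pos _).le (by positivity)) |>.2
  rw [hsq]
  induction n with
  | zero => norm_num [unitBallVolume_one]
  | succ n ih =>
    have hcB : 2 * ((n + 1).centralBinom : ℝ) =
        2 * (2 * n + 1) / (n + 1) * (2 * n.centralBinom) := by
      have h : ((n : ℝ) + 1) * (n + 1).centralBinom = 2 * (2 * n + 1) * n.centralBinom := by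
        exact_mod_cast n.succ_mul_centralBinom_succ
      field_simp
      linarith
    have hκ := sq_mul_two_pi_div_le_unitBallVolume_sq (n + 1)
    have hn2 : (((n + 1 : ℕ) : ℝ) + 1) = n + 2 := by push_cast; ring
    have hn3 : (((n + 1 : ℕ) : ℝ) + 2) = n + 3 := by push_cast; ring
    rw [hn3] at hκ
    rw [hcB, hn2, mul_pow]
    calc (2 * (2 * n + 1) / (n + 1) : ℝ) ^ 2 * (2 * n.centralBinom : ℝ) ^ 2
        ≤ (2 * (2 * n + 1) / (n + 1) : ℝ) ^ 2 *
          (unitBallVolume (n + 1) ^ 2 * (n + 1) ^ (n + 1)) := by gcongr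
      _ = unitBallVolume (n + 1) ^ 2 *
          ((2 * (2 * n + 1) / (n + 1) : ℝ) ^ 2 * (n + 1) ^ (n + 1)) := by ring
      _ ≤ unitBallVolume (n + 1) ^ 2 * (2 * Real.pi / (n + 3) * (n + 2 : ℝ) ^ (n + 2)) := by
        gcongr ?_ * ?_
        exact sq_mul_pow_le_two_pi_div_mul_pow n
      _ ≤ unitBallVolume (n + 1 + 1) ^ 2 * (n + 2 : ℝ) ^ (n + 2) := by
        rw [← mul_assoc]
        gcongr

lemma mul_unitBallVolume_le_mul_sqrt {c x : ℝ} {j : ℕ} (hx : 0 ≤ x)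
    (h : c ^ 2 * (j + 2) ≤ 6 * x) : c * unitBallVolume j ≤ unitBallVolume (j + 1) * √x := by
  refine abs_le_of_sq_le_sq' ?_ (mul_nonneg (unitBallVolume_pos _).le (by positivity)) |>.2
  have hc : c ^ 2 ≤ 2 * Real.pi / (j + 2) * x := by
    rw [div_mul_eq_mul_div, le_div_iff₀ (by positivity)]
    exact h.trans (by gcongr; linarith [Real.pi_gt_three])
  calc (c * unitBallVolume j) ^ 2 = unitBallVolume j ^ 2 * c ^ 2 := by ring
    _ ≤ unitBallVolume j ^ 2 * (2 * Real.pi / (j + 2) * x) := by gcongr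
    _ ≤ unitBallVolume (j + 1) ^ 2 * x := by
      rw [← mul_assoc]
      gcongr
      exact sq_mul_two_pi_div_le_unitBallVolume_sq j
    _ = (unitBallVolume (j + 1) * √x) ^ 2 := by rw [mul_pow, Real.sq_sqrt hx]

lemma choose_succ_le_choose_of_le {n k : ℕ} (h : n ≤ 2 * k + 1) :
    n.choose (k + 1) ≤ n.choose k := by
  refine Nat.le_of_mul_le_mul_right ?_ k.succ_pos
  rw [Nat.choose_succ_right_eq]
  exact Nat.mul_le_mul_left _ (by omega)

lemma four_mul_choose_le_unitBallVolume_mul {n i : ℕ} (hi : i < n) :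
    4 * ((2 * n).choose (n + 1 + i) : ℝ) ≤
      unitBallVolume (n + 2 + i) * √(n + 1 : ℝ) ^ (n + 2 + i) := by
  have hn0 : (0 : ℝ) ≤ n := n.cast_nonneg
  induction i with
  | zero =>
    have hcB : ((n : ℝ) + 1) * (2 * n).choose (n + 1) = n * n.centralBinom := by
      have h := Nat.choose_succ_right_eq (2 * n) n
      rw [show 2 * n - n = n by omega, ← Nat.centralBinom_eq_two_mul_choose] at h
      rw [mul_comm, mul_comm (n : ℝ)]
      exact_mod_cast h
    have hκ : (2 * n / (n + 1)) * unitBallVolume (n + 1) ≤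
        unitBallVolume (n + 2) * √(n + 1 : ℝ) := by
      refine mul_unitBallVolume_le_mul_sqrt (by positivity) ?_
      rw [div_pow, div_mul_eq_mul_div, div_le_iff₀ (by positivity)]
      push_cast
      nlinarith [pow_nonneg hn0 3, pow_nonneg hn0 2]
    calc 4 * ((2 * n).choose (n + 1) : ℝ)
        = 2 * n / (n + 1) * (2 * n.centralBinom) := by field_simp; linarith
      _ ≤ 2 * n / (n + 1) * (unitBallVolume (n + 1) * √(n + 1 : ℝ) ^ (n + 1)) := by
        gcongr ?_ * ?_
        exact two_mul_centralBinom_le_unitBallVolume_mul n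
      _ = 2 * n / (n + 1) * unitBallVolume (n + 1) * √(n + 1 : ℝ) ^ (n + 1) := by ring
      _ ≤ unitBallVolume (n + 2) * √(n + 1 : ℝ) * √(n + 1 : ℝ) ^ (n + 1) := by gcongr
      _ = unitBallVolume (n + 2) * √(n + 1 : ℝ) ^ (n + 2) := by ring
  | succ i ih =>
    have hκ : 1 * unitBallVolume (n + 2 + i) ≤ unitBallVolume (n + 2 + i + 1) * √(n + 1 : ℝ) := by
      refine mul_unitBallVolume_le_mul_sqrt (by positivity) ?_
      have hin : (i : ℝ) + 1 ≤ n := by exact_mod_cast hi.le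
      push_cast
      linarith
    calc 4 * ((2 * n).choose (n + 1 + i + 1) : ℝ) ≤ 4 * ((2 * n).choose (n + 1 + i) : ℝ) := by
          gcongr
          exact choose_succ_le_choose_of_le (by omega)
      _ ≤ unitBallVolume (n + 2 + i) * √(n + 1 : ℝ) ^ (n + 2 + i) := ih (by omega)
      _ ≤ unitBallVolume (n + 2 + i + 1) * √(n + 1 : ℝ) * √(n + 1 : ℝ) ^ (n + 2 + i) := by
        rw [one_mul] at hκ
        gcongr
      _ = unitBallVolume (n + 2 + (i + 1)) * √(n + 1 : ℝ) ^ (n + 2 + (i + 1)) := by ring_nf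

end UnitBallVolume

section Numerics

lemma Cbound_eq_sum (r : ℕ) {m : ℕ} (hm : 3 ≤ m) :
    Cbound r m = ∑ j ∈ Finset.range (r + 1), (r.choose j : ℝ) * unitBallVolume j * √m ^ j := by
  have hpow (j : ℕ) : (m : ℝ) ^ ((j : ℝ) / 2) = √m ^ j := by
    rw [Real.sqrt_eq_rpow, ← Real.rpow_mul_natCast (by positivity), one_div_mul_eq_div]
  rw [Cbound, if_neg (by omega), if_neg (by omega), Finset.sum_range_succ, Nat.choose_self,
    add_comm]
  simp only [hpow, unitBallVolume, Nat.cast_one, one_mul]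

lemma sum_le_Cbound {r m : ℕ} (hm : 3 ≤ m) {s : Finset ℕ} (hs : ∀ j ∈ s, j ≤ r) :
    ∑ j ∈ s, (r.choose j : ℝ) * unitBallVolume j * √m ^ j ≤ Cbound r m := by
  rw [Cbound_eq_sum r hm]
  refine Finset.sum_le_sum_of_subset_of_nonneg
    (fun j hj => Finset.mem_range_succ_iff.2 (hs j hj)) fun j _ _ => ?_
  have := unitBallVolume_pos j
  positivity

lemma choose_two_mul_sub_le_choose {R k j : ℕ} (hkR : k ≤ R) (hj : j ≤ k) :
    (2 * R).choose (k - j) ≤ (2 * R).choose (k + j) := by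
  have hmono {a b : ℕ} (hab : a ≤ b) (hb : b ≤ R) : (2 * R).choose a ≤ (2 * R).choose b := by
    induction b, hab using Nat.le_induction with
    | base => rfl
    | succ b _ ih =>
      exact (ih (by omega)).trans (Nat.choose_le_succ_of_lt_half_left (by omega))
  rcases le_total (k + j) R with h | h
  · exact hmono (by omega) h
  · rw [← Nat.choose_symm (by omega : k + j ≤ 2 * R)]
    exact hmono (by omega) (by omega)

/- Vandermonde's identity, folded along the symmetry `j ↦ 2n - j` of the row `2n`. -/
lemma choose_two_mul_add_le_sum {R n : ℕ} (h : n + 1 ≤ R) :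
    (2 * R + 2 * n).choose (2 * n + 1) ≤ (2 * R).choose (n + 1) * n.centralBinom +
      2 * ∑ i ∈ Finset.range n, (2 * R).choose (n + 2 + i) * (2 * n).choose (n + 1 + i) := by
  set F : ℕ → ℕ := fun j => (2 * R).choose j * (2 * n).choose (2 * n + 1 - j) with hF
  have hfold : ∑ i ∈ Finset.range (n + 1), F (n - i) ≤
      ∑ i ∈ Finset.range n, (2 * R).choose (n + 2 + i) * (2 * n).choose (n + 1 + i) := by
    rw [Finset.sum_range_succ]
    have hlast : F (n - n) = 0 := by simp [hF]
    rw [hlast, add_zero]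
    refine Finset.sum_le_sum fun i hi => ?_
    have hi' := Finset.mem_range.1 hi
    have hR := choose_two_mul_sub_le_choose h (j := i + 1) (by omega)
    rw [show n + 1 - (i + 1) = n - i by omega, show n + 1 + (i + 1) = n + 2 + i by ring] at hR
    rw [hF]
    dsimp only
    rw [show 2 * n + 1 - (n - i) = n + 1 + i by omega]
    exact Nat.mul_le_mul_right _ hR
  have htail : ∑ i ∈ Finset.range n, F (n + 2 + i) =
      ∑ i ∈ Finset.range n, (2 * R).choose (n + 2 + i) * (2 * n).choose (n + 1 + i) := by
    refine Finset.sum_congr rfl fun i hi => ?_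
    have hi' := Finset.mem_range.1 hi
    rw [hF, ← Nat.choose_symm (by omega : n + 1 + i ≤ 2 * n)]
    dsimp only
    congr 2
    omega
  have hmid : F (n + 1) = (2 * R).choose (n + 1) * n.centralBinom := by
    rw [hF, Nat.centralBinom]
    dsimp only
    congr 2
    omega
  have hsplit : (2 * R + 2 * n).choose (2 * n + 1) =
      ∑ i ∈ Finset.range (n + 1), F (n - i) + F (n + 1) + ∑ i ∈ Finset.range n, F (n + 2 + i) := by
    rw [Nat.add_choose_eq, Finset.Nat.sum_antidiagonal_eq_sum_range_succ
        (fun i j => (2 * R).choose i * (2 * n).choose j),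
      show (2 * n + 1).succ = n + 2 + n by omega, Finset.sum_range_add _ (n + 2),
      Finset.sum_range_succ _ (n + 1), ← Finset.sum_range_reflect _ (n + 1)]
    simp only [Nat.add_sub_cancel, hF]
  linarith

theorem two_mul_multichoose_le_Cbound {R m : ℕ} (hm : 3 ≤ m) (hmR : m ≤ R) :
    2 * ((2 * R).multichoose (2 * m - 1) : ℝ) ≤ Cbound (2 * R) m := by
  obtain ⟨n, rfl⟩ : ∃ n, m = n + 1 := ⟨m - 1, by omega⟩
  have hmult : (2 * R).multichoose (2 * (n + 1) - 1) = (2 * R + 2 * n).choose (2 * n + 1) := by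
    rw [Nat.multichoose_eq]
    congr 1
  have hchoose : ((2 * R + 2 * n).choose (2 * n + 1) : ℝ) ≤ _ :=
    Nat.cast_le.2 (choose_two_mul_add_le_sum hmR)
  push_cast at hchoose
  rw [hmult]
  refine le_trans ?_ (sum_le_Cbound hm (s := (Finset.range (n + 1)).image (n + 1 + ·)) ?_)
  · rw [Finset.sum_image (by simp), Finset.sum_range_succ']
    push_cast
    have h0 := mul_le_mul_of_nonneg_left (two_mul_centralBinom_le_unitBallVolume_mul n)
      ((2 * R).choose (n + 1)).cast_nonneg
    have h1 : 4 * ∑ i ∈ Finset.range n, ((2 * R).choose (n + 2 + i) : ℝ) *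
          (2 * n).choose (n + 1 + i) ≤
        ∑ i ∈ Finset.range n, ((2 * R).choose (n + 1 + (i + 1)) : ℝ) *
          unitBallVolume (n + 1 + (i + 1)) * √(n + 1 : ℝ) ^ (n + 1 + (i + 1)) := by
      rw [Finset.mul_sum]
      refine Finset.sum_le_sum fun i hi => ?_
      have h := four_mul_choose_le_unitBallVolume_mul (Finset.mem_range.1 hi)
      rw [show n + 1 + (i + 1) = n + 2 + i by ring, mul_left_comm, mul_assoc]
      gcongr
    simp only [add_zero]
    linarith
  · simp only [Finset.mem_image, Finset.mem_range]
    omega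


lemma sqrt_two_pow_le_unitBallVolume {j : ℕ} (hj : j ≤ 4) : √2 ^ j ≤ unitBallVolume j := by
  have h2 : √2 ≤ 2 := Real.sqrt_le_iff.2 ⟨by norm_num, by norm_num⟩
  have hsq : √2 ^ 2 = 2 := Real.sq_sqrt (by norm_num)
  have hpi := Real.pi_gt_three
  interval_cases j
  · simp [unitBallVolume_zero]
  · rwa [pow_one, unitBallVolume_one]
  · rw [hsq, unitBallVolume_add_two, unitBallVolume_zero]
    norm_num
    linarith
  · rw [pow_succ, hsq, unitBallVolume_add_two, unitBallVolume_one]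
    norm_num
    linarith
  · rw [show 4 = 2 * 2 from rfl, pow_mul, hsq, unitBallVolume_add_two, unitBallVolume_add_two 0,
      unitBallVolume_zero]
    norm_num
    nlinarith

theorem one_add_sqrt_pow_le_Cbound {r m : ℕ} (hr : r ≤ 4) (hm : 3 ≤ m) :
    (1 + √2 * √m) ^ r ≤ Cbound r m := by
  rw [Cbound_eq_sum r hm, add_comm, add_pow]
  refine Finset.sum_le_sum fun j hj => ?_
  have hj4 : j ≤ 4 := (Finset.mem_range_succ_iff.1 hj).trans hr
  calc (√2 * √m) ^ j * 1 ^ (r - j) * (r.choose j : ℝ) = r.choose j * √2 ^ j * √m ^ j := by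
        rw [one_pow]; ring
    _ ≤ r.choose j * unitBallVolume j * √m ^ j := by
      gcongr
      exact sqrt_two_pow_le_unitBallVolume hj4

lemma choose_mul_le_choose_two_mul_add_two : ∀ R ∈ Finset.Icc 3 23, ∀ j ∈ Finset.range (R + 1),
    5 * (R.choose j * 11 ^ j * (if j = 0 then 3 else 1)) *
        (25 ^ (j / 2 + 1) * (j + 2).doubleFactorial) ≤
      (2 * R).choose (j + 2) * 6 ^ j * ((1 + j % 2) * 157 ^ (j / 2 + 1)) := by
  decide +kernel

lemma choose_mul_le_choose_mul_unitBallVolume {R j : ℕ} (h3 : 3 ≤ R) (h23 : R ≤ 23) (hj : j ≤ R) :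
    5 * ((R.choose j : ℝ) * (11 / 6) ^ j * (if j = 0 then 3 else 1)) ≤
      (2 * R).choose (j + 2) * unitBallVolume (j + 2) := by
  have htable := choose_mul_le_choose_two_mul_add_two R (Finset.mem_Icc.2 ⟨h3, h23⟩) j
    (Finset.mem_range_succ_iff.2 hj)
  have hκ := le_unitBallVolume_mul_doubleFactorial (j + 2)
  rw [Nat.add_mod_right, Nat.add_div_right _ (by norm_num), div_pow, mul_div_assoc',
    div_le_iff₀ (by positivity)] at hκ
  have : (0 : ℝ) < ((j + 2).doubleFactorial : ℝ) := by
    exact_mod_cast Nat.doubleFactorial_pos _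
  have hpos : (0 : ℝ) < 25 ^ (j / 2 + 1) * ((j + 2).doubleFactorial : ℝ) * 6 ^ j := by positivity
  refine le_of_mul_le_mul_right ?_ hpos
  calc 5 * ((R.choose j : ℝ) * (11 / 6) ^ j * (if j = 0 then 3 else 1)) *
        (25 ^ (j / 2 + 1) * ((j + 2).doubleFactorial : ℝ) * 6 ^ j)
      = ((5 * (R.choose j * 11 ^ j * (if j = 0 then 3 else 1)) *
        (25 ^ (j / 2 + 1) * (j + 2).doubleFactorial) : ℕ) : ℝ) := by
        push_cast; rw [div_pow]; field_simp
    _ ≤ (((2 * R).choose (j + 2) * 6 ^ j * ((1 + j % 2) * 157 ^ (j / 2 + 1)) : ℕ) : ℝ) :=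
        Nat.cast_le.2 htable
    _ = (2 * R).choose (j + 2) * 6 ^ j * (((1 + j % 2 : ℕ) : ℝ) * 157 ^ (j / 2 + 1)) := by
        push_cast; rfl
    _ ≤ (2 * R).choose (j + 2) * 6 ^ j *
        (unitBallVolume (j + 2) * ((j + 2).doubleFactorial : ℝ) * 25 ^ (j / 2 + 1)) := by
        gcongr
    _ = _ := by ring

theorem five_mul_add_two_le_Cbound {R m : ℕ} (h3 : 3 ≤ R) (h23 : R ≤ 23) (hm : 3 ≤ m) :
    5 * (m : ℝ) * ((1 + √m / (6 / 11)) ^ R + 2) ≤ Cbound (2 * R) m := by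
  refine le_trans ?_ (sum_le_Cbound hm (s := (Finset.range (R + 1)).image (· + 2)) ?_)
  · have hm2 : √(m : ℝ) ^ 2 = m := Real.sq_sqrt (by positivity)
    have hexp : (1 + √m / (6 / 11)) ^ R + 2 = ∑ j ∈ Finset.range (R + 1),
        (R.choose j : ℝ) * (11 / 6) ^ j * (if j = 0 then 3 else 1) * √m ^ j := by
      rw [add_comm 1, add_pow, Finset.sum_range_succ', Finset.sum_range_succ' _ R, add_assoc]
      congr 1
      · refine Finset.sum_congr rfl fun j _ => ?_
        rw [if_neg j.succ_ne_zero, one_pow, div_pow, div_pow, div_pow]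
        field_simp
      · norm_num
    rw [Finset.sum_image (by simp), hexp, Finset.mul_sum]
    refine Finset.sum_le_sum fun j hj => ?_
    have h := choose_mul_le_choose_mul_unitBallVolume h3 h23 (Finset.mem_range_succ_iff.1 hj)
    calc _ = 5 * ((R.choose j : ℝ) * (11 / 6) ^ j * (if j = 0 then 3 else 1)) * √m ^ (j + 2) := by
          rw [pow_add, hm2]; ring
      _ ≤ _ := by gcongr
  · simp only [Finset.mem_image, Finset.mem_range]
    omega

lemma nine_pow_div_four_le (R : ℕ) : (9 : ℝ) ^ (R / 4) ≤ (7 / 4) ^ R :=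
  calc (9 : ℝ) ^ (R / 4) ≤ ((7 / 4) ^ 4) ^ (R / 4) := by gcongr; norm_num
    _ = (7 / 4) ^ (4 * (R / 4)) := by rw [pow_mul]
    _ ≤ (7 / 4) ^ R := pow_le_pow_right₀ (by norm_num) (Nat.mul_div_le R 4)

/- The binomial coefficient is one term of the expansion of `(1/8 + 1) ^ (2R + R/4)`. -/
lemma choose_two_mul_add_div_four_le (R : ℕ) :
    ((2 * R + R / 4).choose (R / 4) : ℝ) ≤ (567 / 256) ^ R := by
  set k := R / 4
  have hterm : (1 / 8 : ℝ) ^ k * (2 * R + k).choose k ≤ (9 / 8) ^ (2 * R + k) := by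
    have h := Finset.single_le_sum (s := Finset.range (2 * R + k + 1))
      (f := fun j => (1 / 8 : ℝ) ^ j * 1 ^ (2 * R + k - j) * (2 * R + k).choose j)
      (fun j _ => by positivity) (Finset.mem_range_succ_iff.2 (Nat.le_add_left k (2 * R)))
    rw [← add_pow] at h
    norm_num at h ⊢
    exact h
  calc ((2 * R + k).choose k : ℝ) = 8 ^ k * ((1 / 8) ^ k * (2 * R + k).choose k) := by
        rw [← mul_assoc, ← mul_pow]; norm_num
    _ ≤ 8 ^ k * (9 / 8) ^ (2 * R + k) := by gcongr
    _ = (81 / 64) ^ R * 9 ^ k := by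
      rw [pow_add, pow_mul, mul_left_comm, ← mul_pow]; norm_num
    _ ≤ (81 / 64) ^ R * (7 / 4) ^ R := by gcongr; exact nine_pow_div_four_le R
    _ = (567 / 256) ^ R := by rw [← mul_pow]; norm_num

lemma cubic_mul_pow_le_pow {R : ℕ} (h : 24 ≤ R) :
    32 * ((R + 1) * (R + 2) ^ 2) * 17 ^ R ≤ 32 ^ R := by
  induction R, h using Nat.le_induction with
  | base => norm_num
  | succ R hR ih =>
    have hcubic : 17 * ((R + 1 + 1) * (R + 1 + 2) ^ 2) ≤ 32 * ((R + 1) * (R + 2) ^ 2) := by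
      nlinarith [Nat.mul_le_mul hR hR, Nat.mul_le_mul hR (Nat.mul_le_mul hR hR)]
    calc 32 * ((R + 1 + 1) * (R + 1 + 2) ^ 2) * 17 ^ (R + 1)
        = 32 * (17 * ((R + 1 + 1) * (R + 1 + 2) ^ 2)) * 17 ^ R := by ring
      _ ≤ 32 * (32 * ((R + 1) * (R + 2) ^ 2)) * 17 ^ R := by gcongr
      _ ≤ 32 ^ R * 32 := by linarith

lemma sixteen_pow_le_choose_mul_centralBinom {n : ℕ} (hn : 1 ≤ n) :
    (16 : ℝ) ^ (n + 1) ≤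
      16 * ((n + 2) * (n + 3)) * ((2 * (n + 1)).choose (n + 3) * n.centralBinom) := by
  have h1 : ((n : ℝ) + 3) * ((n + 2) * (2 * (n + 1)).choose (n + 3)) =
      n * (n + 1) * (n + 1).centralBinom := by
    have ha := Nat.choose_succ_right_eq (2 * (n + 1)) (n + 1)
    have hb := Nat.choose_succ_right_eq (2 * (n + 1)) (n + 2)
    rw [show 2 * (n + 1) - (n + 1) = n + 1 by omega, ← Nat.centralBinom_eq_two_mul_choose] at ha
    rw [show 2 * (n + 1) - (n + 2) = n by omega] at hb
    have ha' : (((2 * (n + 1)).choose (n + 2) : ℝ)) * (n + 2) = (n + 1).centralBinom * (n + 1) := by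
      exact_mod_cast ha
    have hb' :
        (((2 * (n + 1)).choose (n + 3) : ℝ)) * (n + 3) = (2 * (n + 1)).choose (n + 2) * n := by
      exact_mod_cast hb
    linear_combination (n + 2) * hb' + n * ha'
  have hc : (4 : ℝ) ^ n ≤ 2 * n * n.centralBinom := by
    exact_mod_cast Nat.four_pow_le_two_mul_self_mul_centralBinom n hn
  have hd : (4 : ℝ) ^ (n + 1) ≤ 2 * (n + 1) * (n + 1).centralBinom := by
    exact_mod_cast Nat.four_pow_le_two_mul_self_mul_centralBinom (n + 1) n.succ_pos
  calc (16 : ℝ) ^ (n + 1) = 4 * (4 ^ n * 4 ^ (n + 1)) := by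
        rw [show (16 : ℝ) = 4 * 4 by norm_num, mul_pow, pow_succ 4 n]; ring
    _ ≤ 4 * ((2 * n * n.centralBinom) * (2 * (n + 1) * (n + 1).centralBinom)) := by gcongr
    _ = 16 * n.centralBinom * (n * (n + 1) * (n + 1).centralBinom) := by ring
    _ = _ := by rw [← h1]; ring

lemma mul_eight_point_five_pow_le {n : ℕ} (hn : 24 ≤ n + 1) :
    24 * (17 / 2 : ℝ) ^ (n + 1) ≤ 12 / (n + 3) *
      ((2 * (n + 1)).choose (n + 3) * n.centralBinom) := by
  have hcubic : 32 * (((n : ℝ) + 2) * (n + 3) ^ 2) * 17 ^ (n + 1) ≤ 32 ^ (n + 1) := by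
    exact_mod_cast cubic_mul_pow_le_pow hn
  have h16 := sixteen_pow_le_choose_mul_centralBinom (by omega : 1 ≤ n)
  rw [div_mul_eq_mul_div, le_div_iff₀ (by positivity)]
  refine le_of_mul_le_mul_left ?_ (by positivity : (0 : ℝ) < 4 / 3 * ((n + 2) * (n + 3)))
  calc 4 / 3 * (((n : ℝ) + 2) * (n + 3)) * (24 * (17 / 2 : ℝ) ^ (n + 1) * (n + 3))
      = 32 * (((n : ℝ) + 2) * (n + 3) ^ 2) * 17 ^ (n + 1) / 2 ^ (n + 1) := by
        rw [div_pow]; ring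
    _ ≤ 32 ^ (n + 1) / 2 ^ (n + 1) := by gcongr
    _ = 16 ^ (n + 1) := by rw [← div_pow]; norm_num
    _ ≤ _ := by linarith

lemma choose_mul_one_add_pow_le {R m : ℕ} (hR : 1 ≤ R) (hRm : R ≤ m) :
    (2 * R + R / 4).choose (R / 4) * (1 + √m / √(R / 8)) ^ R ≤
      (17 / 2 * (√m / √R)) ^ R := by
  have : (0 : ℝ) < R := by exact_mod_cast hR
  have hs : 1 ≤ √(m : ℝ) / √R := by
    rw [one_le_div (by positivity)]
    exact Real.sqrt_le_sqrt (by exact_mod_cast hRm)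
  have h8 : √(8 : ℝ) ≤ 2.8285 := Real.sqrt_le_iff.2 ⟨by norm_num, by norm_num⟩
  have hdiv : √(m : ℝ) / √(R / 8) = √8 * (√m / √R) := by
    rw [Real.sqrt_div' _ (by norm_num)]
    field_simp
  calc ((2 * R + R / 4).choose (R / 4) : ℝ) * (1 + √m / √(R / 8)) ^ R
      ≤ (567 / 256) ^ R * (1 * (√m / √R) + √8 * (√m / √R)) ^ R := by
        rw [hdiv]
        gcongr
        · exact choose_two_mul_add_div_four_le R
        · linarith
    _ = (567 / 256 * (1 + √8) * (√m / √R)) ^ R := by rw [← mul_pow]; ring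
    _ ≤ (17 / 2 * (√m / √R)) ^ R := by
      gcongr
      linarith

theorem eight_mul_add_two_le_Cbound {R m : ℕ} (hR : 24 ≤ R) (hRm : R ≤ m) :
    8 * (m : ℝ) * ((2 * R + R / 4).choose (R / 4) * (1 + √m / √(R / 8)) ^ R + 2) ≤
      Cbound (2 * R) m := by
  obtain ⟨n, rfl⟩ : ∃ n, R = n + 1 := ⟨R - 1, by omega⟩
  set s := √(m : ℝ) / √((n + 1 : ℕ) : ℝ)
  have hs : 1 ≤ s := by
    rw [one_le_div (by positivity)]
    exact Real.sqrt_le_sqrt (by exact_mod_cast hRm)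
  have hone : 1 ≤ (17 / 2 * s) ^ (n + 1) := one_le_pow₀ (by linarith)
  have hm : √(m : ℝ) ^ (n + 3) = m * (s ^ (n + 1) * √(n + 1 : ℝ) ^ (n + 1)) := by
    have hm2 : √(m : ℝ) ^ 2 = m := Real.sq_sqrt m.cast_nonneg
    rw [← mul_pow, ← Nat.cast_succ, div_mul_cancel₀ _ (by positivity),
      show n + 3 = 2 + (n + 1) by ring, pow_add, hm2]
  have hκ := two_mul_centralBinom_le_unitBallVolume_mul n
  have hCbound := sum_le_Cbound (r := 2 * (n + 1)) (m := m) (by omega) (s := {n + 3})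
    (by simp; omega)
  rw [Finset.sum_singleton] at hCbound
  calc 8 * (m : ℝ) * (_ + 2) ≤ 8 * m * ((17 / 2 * s) ^ (n + 1) + 2 * (17 / 2 * s) ^ (n + 1)) := by
        gcongr
        · exact choose_mul_one_add_pow_le (by omega) hRm
        · linarith
    _ = m * s ^ (n + 1) * (24 * (17 / 2) ^ (n + 1)) := by rw [mul_pow]; ring
    _ ≤ m * s ^ (n + 1) *
        (12 / (n + 3) * ((2 * (n + 1)).choose (n + 3) * n.centralBinom)) := by
      gcongr _ * ?_
      exact mul_eight_point_five_pow_le hR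
    _ = m * s ^ (n + 1) * (2 * n + 2).choose (n + 3) * (2 * 3 / (n + 3)) *
        (2 * n.centralBinom) := by
      ring_nf
    _ ≤ m * s ^ (n + 1) * (2 * n + 2).choose (n + 3) * (2 * Real.pi / (n + 3)) *
        (unitBallVolume (n + 1) * √(n + 1 : ℝ) ^ (n + 1)) := by
      gcongr
      exact Real.pi_gt_three.le
    _ = (2 * (n + 1)).choose (n + 3) * unitBallVolume (n + 3) * √m ^ (n + 3) := by
      rw [unitBallVolume_add_two (n + 1), hm]
      push_cast
      ring_nf
    _ ≤ Cbound (2 * (n + 1)) m := hCbound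

variable {E F : Type*} [NormedAddCommGroup E] [InnerProductSpace ℝ E] [FiniteDimensional ℝ E]
  [NormedAddCommGroup F] [InnerProductSpace ℝ F] [FiniteDimensional ℝ F]

lemma IsSplitSystem.two_mul_le_Cbound_of_three_le {R m n : ℕ} {z : Fin n → WithLp 2 (E × F)}
    (hz : IsSplitSystem m z) (hE : Module.finrank ℝ E = R) (hF : Module.finrank ℝ F = R)
    (hm : 3 ≤ m) : 2 * (n : ℝ) ≤ Cbound (2 * R) m := by
  have hdim : Module.finrank ℝ (WithLp 2 (E × F)) = 2 * R := by
    rw [(WithLp.linearEquiv 2 ℝ (E × F)).finrank_eq, Module.finrank_prod, hE, hF, two_mul]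
  have hEF : Module.finrank ℝ E + Module.finrank ℝ F = 2 * R := by rw [hE, hF, two_mul]
  rcases le_or_gt m R with hmR | hRm
  · have h := hz.card_le_multichoose (by omega) hz.ne_neg
    rw [Fintype.card_fin, hdim] at h
    exact le_trans (by gcongr) (two_mul_multichoose_le_Cbound hm hmR)
  rcases le_or_gt R 2 with hR2 | hR2
  · have h := (hz.symmetrize hz.ne_neg).card_le_one_add_sqrt_pow
    rw [hdim, Fintype.card_sum, Fintype.card_fin, ← two_mul] at h
    push_cast at h
    exact h.trans (one_add_sqrt_pow_le_Cbound (by omega) hm)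
  rcases le_or_gt R 23 with hR23 | hR23
  · have h := hz.two_mul_le_mul_choose_mul_pow_add (by omega) (a := 5) (k := 0) (ρ := 6 / 11)
      (by norm_num) (by norm_num) (by norm_num)
    rw [hF, Nat.choose_zero_right, Nat.cast_one, one_mul] at h
    exact h.trans (five_mul_add_two_le_Cbound hR2 hR23 hm)
  · have hk : 2 / ((8 : ℕ) : ℝ) + 2 * √((R : ℝ) / 8) ^ 2 ≤ (R / 4 : ℕ) + 1 := by
      have hR4 : (R : ℝ) + 1 ≤ 4 * ((R / 4 : ℕ) + 1) := by
        exact_mod_cast (by omega : R + 1 ≤ 4 * (R / 4 + 1))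
      rw [Real.sq_sqrt (by positivity)]
      push_cast at hR4 ⊢
      linarith
    have h := hz.two_mul_le_mul_choose_mul_pow_add (by omega) (by norm_num) (by positivity) hk
    rw [hEF, hF] at h
    exact h.trans (eight_mul_add_two_le_Cbound hR23 hRm.le)

theorem IsSplitSystem.two_mul_le_Cbound {R m n : ℕ} {z : Fin n → WithLp 2 (E × F)}
    (hz : IsSplitSystem m z) (hE : Module.finrank ℝ E = R) (hF : Module.finrank ℝ F = R)
    (hm : 1 ≤ m) : 2 * (n : ℝ) ≤ Cbound (2 * R) m := by
  have hdim : Module.finrank ℝ (WithLp 2 (E × F)) = 2 * R := by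
    rw [(WithLp.linearEquiv 2 ℝ (E × F)).finrank_eq, Module.finrank_prod, hE, hF, two_mul]
  obtain rfl | rfl | hm3 : m = 1 ∨ m = 2 ∨ 3 ≤ m := by omega
  · have h := hz.card_le_finrank hz.ne_neg
    rw [Fintype.card_fin, hdim] at h
    rw [Cbound, if_pos rfl]
    gcongr
  · have h := hz.two_mul_card_le hz.ne_neg
    rw [Fintype.card_fin, hdim] at h
    have h' : (2 * n : ℝ) ≤ max 480 (2 * (2 * R : ℕ) * ((2 * R - 1 : ℕ) : ℝ)) := by exact_mod_cast h
    rw [Cbound, if_neg (by norm_num), if_pos rfl]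
    refine h'.trans (max_le_max_left _ ?_)
    rcases Nat.eq_zero_or_pos R with rfl | hR
    · simp
    · rw [Nat.cast_sub (by omega), Nat.cast_one]
  · exact hz.two_mul_le_Cbound_of_three_le hE hF hm3

end Numerics

section EuclideanRealization

open scoped RealInnerProductSpace

lemma exists_smul_mem_of_mem_span {A K V : Type*} [CommRing A] [IsDomain A] [Field K] [Algebra A K]
    [IsFractionRing A K] [AddCommGroup V] [Module A V] [Module K V] [IsScalarTower A K V]
    {Λ : Submodule A V} {v : V} (hv : v ∈ Submodule.span K (Λ : Set V)) :
    ∃ n : A, n ≠ 0 ∧ n • v ∈ Λ := by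
  induction hv using Submodule.span_induction with
  | mem x hx => exact ⟨1, one_ne_zero, by rwa [one_smul]⟩
  | zero => exact ⟨1, one_ne_zero, by simp⟩
  | add x y _ _ hx hy =>
    obtain ⟨k, hk, hkx⟩ := hx
    obtain ⟨l, hl, hly⟩ := hy
    refine ⟨k * l, mul_ne_zero hk hl, ?_⟩
    rw [smul_add, mul_smul k l y, mul_comm, mul_smul]
    exact Λ.add_mem (Λ.smul_mem _ hkx) (Λ.smul_mem _ hly)
  | smul t x _ hx =>
    obtain ⟨k, hk, hkx⟩ := hx
    obtain ⟨p, q, hq, rfl⟩ := IsFractionRing.div_surjective (A := A) t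
    refine ⟨q * k, mul_ne_zero (nonZeroDivisors.ne_zero hq) hk, ?_⟩
    have hq' : algebraMap A K q ≠ 0 :=
      IsFractionRing.to_map_ne_zero_of_mem_nonZeroDivisors hq
    have hclear : (q * k) • (algebraMap A K p / algebraMap A K q) • x = p • k • x := by
      rw [← algebraMap_smul K (q * k), ← algebraMap_smul K p, ← algebraMap_smul K k, smul_smul,
        smul_smul, map_mul]
      congr 1
      field_simp
    exact hclear ▸ Λ.smul_mem _ hkx

lemma isTotPos_apply_self_of_span_eq_top {A K V : Type*} [CommRing A] [IsDomain A] [Field K]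
    [Algebra A K] [IsFractionRing A K] [AddCommGroup V] [Module A V] [Module K V]
    [IsScalarTower A K V] {Λ : Submodule A V} {B : V →ₗ[K] V →ₗ[K] K}
    (hΛ : Submodule.span K (Λ : Set V) = ⊤) (hB : ∀ v ∈ Λ, v ≠ 0 → IsTotPos (B v v)) {v : V}
    (hv : v ≠ 0) : IsTotPos (B v v) := by
  intro φ
  obtain ⟨k, hk, hkv⟩ := exists_smul_mem_of_mem_span (hΛ ▸ Submodule.mem_top : v ∈ _)
  rw [← algebraMap_smul K] at hkv
  have hk' : algebraMap A K k ≠ 0 := by simpa using hk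
  have h := hB _ hkv (smul_ne_zero hk' hv) φ
  simp only [map_smul, LinearMap.smul_apply, smul_eq_mul, map_mul, ← mul_assoc] at h
  exact pos_of_mul_pos_right h (mul_self_nonneg _)

theorem exists_euclidean_realization {K V : Type*} [Field K] [AddCommGroup V] [Module K V]
    [FiniteDimensional K V] {B : V →ₗ[K] V →ₗ[K] K} (hB : ∀ v v', B v v' = B v' v)
    {φ : K →+* ℝ} (hφ : ∀ v ≠ 0, 0 < φ (B v v)) {w : ℝ} (hw : 0 ≤ w) :
    ∃ T : V → EuclideanSpace ℝ (Fin (Module.finrank K V)),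
      ∀ v v', ⟪T v, T v'⟫ = w * φ (B v v') := by
  have : CharZero K := φ.charZero
  have : Invertible (2 : K) := invertibleOfNonzero two_ne_zero
  obtain ⟨b, hb⟩ := LinearMap.BilinForm.exists_orthogonal_basis (B := B) ⟨fun v v' => hB v v'⟩
  have hdiag (v v' : V) : B v v' = ∑ i, B (b i) (b i) * (b.repr v i * b.repr v' i) := by
    conv_lhs => rw [← b.sum_repr v, ← b.sum_repr v']
    simp only [map_sum, LinearMap.sum_apply, map_smul, LinearMap.smul_apply, smul_eq_mul]
    refine Finset.sum_congr rfl fun i _ => ?_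
    rw [Finset.sum_eq_single i (fun j _ hj => by rw [hb hj, mul_zero]) (by simp)]
    ring
  refine ⟨fun v => WithLp.toLp 2 fun i => √(w * φ (B (b i) (b i))) * φ (b.repr v i),
    fun v v' => ?_⟩
  rw [PiLp.inner_apply, hdiag, map_sum, Finset.mul_sum]
  refine Finset.sum_congr rfl fun i _ => ?_
  have hsqrt := Real.mul_self_sqrt (mul_nonneg hw (hφ (b i) (b.ne_zero i)).le)
  simp only [RCLike.inner_apply, conj_trivial, map_mul]
  linear_combination (φ (b.repr v i) * φ (b.repr v' i)) * hsqrt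

end EuclideanRealization

section ContinuedFractions

lemma irrational_fract {x : ℝ} (hx : Irrational x) : Irrational (Int.fract x) :=
  hx.sub_intCast _

lemma fract_mem_Ioo {x : ℝ} (hx : Irrational x) : Int.fract x ∈ Set.Ioo 0 1 :=
  ⟨(Int.fract_nonneg x).lt_of_ne' (irrational_fract hx).ne_zero, Int.fract_lt_one x⟩

lemma irrational_gaussMap {y : ℝ} (hy : Irrational y) : Irrational (gaussMap y) :=
  irrational_fract hy.inv

lemma irrational_gaussMap_iterate {y : ℝ} (hy : Irrational y) (n : ℕ) :
    Irrational (gaussMap^[n] y) := by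
  induction n with
  | zero => exact hy
  | succ n ih =>
    rw [Function.iterate_succ_apply']
    exact irrational_gaussMap ih

lemma gaussMap_iterate_fract_mem_Ioo {x : ℝ} (hx : Irrational x) (n : ℕ) :
    gaussMap^[n] (Int.fract x) ∈ Set.Ioo 0 1 := by
  cases n with
  | zero => exact fract_mem_Ioo hx
  | succ n =>
    rw [Function.iterate_succ_apply']
    exact fract_mem_Ioo (irrational_gaussMap_iterate (irrational_fract hx) n).inv

/-- Two consecutive convergents of `ξ`, read off from the remainder `y` of the expansion: the
numbers `α = a + b ξ > 0` and `β = c + d ξ = -α y`, together with the requirement that the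
conjugates of `α` and `β`, where `ξ'` is the conjugate of `ξ`, are positive and increasing. -/
structure IsConvergentPair (ξ ξ' y : ℝ) (a b c d : ℤ) : Prop where
  det : a * d - b * c = -1
  pos : 0 < a + b * ξ
  eq_neg_mul : c + d * ξ = -((a + b * ξ) * y)
  pos_conj : 0 < a + b * ξ'
  le_conj : a + b * ξ' ≤ c + d * ξ'

lemma isConvergentPair_zero {ξ ξ' : ℝ} (h : 1 ≤ ⌊ξ⌋ - ξ') :
    IsConvergentPair ξ ξ' (Int.fract ξ) 1 0 ⌊ξ⌋ (-1) where
  det := by norm_num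
  pos := by norm_num
  eq_neg_mul := by simp [Int.fract, sub_eq_add_neg]
  pos_conj := by norm_num
  le_conj := by push_cast; linarith

namespace IsConvergentPair

variable {ξ ξ' y : ℝ} {a b c d : ℤ}

/- Two steps at once, so that the sign pattern of the convergents is the same again. -/
lemma exists_gaussMap_gaussMap (h : IsConvergentPair ξ ξ' y a b c d) (hy : Irrational y)
    (hy0 : 0 < y) :
    ∃ a' b' c' d' : ℤ, IsConvergentPair ξ ξ' (gaussMap (gaussMap y)) a' b' c' d' := by
  have hz : gaussMap y ∈ Set.Ioo 0 1 := fract_mem_Ioo hy.inv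
  have hyz : gaussMap y = y⁻¹ - ⌊y⁻¹⌋ := rfl
  have hzz : gaussMap (gaussMap y) = (gaussMap y)⁻¹ - ⌊(gaussMap y)⁻¹⌋ := rfl
  have hu : (0 : ℝ) ≤ ⌊y⁻¹⌋ := by exact_mod_cast Int.floor_nonneg.2 (inv_nonneg.2 hy0.le)
  have hv : (1 : ℝ) ≤ ⌊(gaussMap y)⁻¹⌋ := by
    exact_mod_cast Int.le_floor.2 (by exact_mod_cast ((one_lt_inv₀ hz.1).2 hz.2).le)
  rw [hzz]
  generalize gaussMap y = z, ⌊y⁻¹⌋ = u, ⌊(gaussMap y)⁻¹⌋ = v at *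
  obtain ⟨hdet, hpos, heq, hpos', hle'⟩ := h
  have hα : ((a + u * c : ℤ) + (b + u * d : ℤ) * ξ : ℝ) = (a + b * ξ) * (y * z) := by
    have : y * z = 1 - u * y := by rw [hyz]; field_simp
    push_cast
    linear_combination (u : ℝ) * heq - (a + b * ξ) * this
  have hα' : 0 < (a + u * c : ℝ) + (b + u * d) * ξ' := by nlinarith
  refine ⟨a + u * c, b + u * d, c + v * (a + u * c), d + v * (b + u * d), ?_, ?_, ?_, ?_, ?_⟩
  · linear_combination hdet
  · rw [hα]
    exact mul_pos hpos (mul_pos hy0 hz.1)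
  · have : z * z⁻¹ = 1 := mul_inv_cancel₀ hz.1.ne'
    rw [hα]
    push_cast at hα ⊢
    linear_combination heq + (v : ℝ) * hα + (a + b * ξ) * y * this
  · exact_mod_cast hα'
  · push_cast
    nlinarith

lemma add_mul_eq (h : IsConvergentPair ξ ξ' y a b c d) (r : ℝ) :
    (a + b * ξ) + r * (c + d * ξ) = (a + b * ξ) * (1 - r * y) := by
  rw [h.eq_neg_mul]
  ring

lemma add_mul_pos (h : IsConvergentPair ξ ξ' y a b c d) (hy : Irrational y) (hy0 : 0 < y) {r : ℕ}
    (hr : r ≤ ⌊y⁻¹⌋₊) : 0 < (a + b * ξ) + r * (c + d * ξ) := by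
  have hr_lt : (r : ℝ) < y⁻¹ :=
    ((Nat.le_floor_iff (inv_nonneg.2 hy0.le)).1 hr).lt_of_ne' (hy.inv.ne_nat r)
  have hry : r * y < 1 := by rwa [← lt_inv_mul_iff₀' hy0, mul_one]
  rw [h.add_mul_eq]
  exact mul_pos h.pos (sub_pos.2 hry)

lemma pos_conj_snd (h : IsConvergentPair ξ ξ' y a b c d) : 0 < c + d * ξ' :=
  h.pos_conj.trans_le h.le_conj

lemma add_mul_conj_pos (h : IsConvergentPair ξ ξ' y a b c d) (r : ℕ) :
    0 < (a + b * ξ') + r * (c + d * ξ') :=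
  add_pos_of_pos_of_nonneg h.pos_conj (mul_nonneg r.cast_nonneg h.pos_conj_snd.le)

end IsConvergentPair

theorem exists_isConvergentPair {ξ ξ' : ℝ} (hξ : Irrational ξ) (h : 1 ≤ ⌊ξ⌋ - ξ') (i : ℕ) :
    ∃ a b c d : ℤ, IsConvergentPair ξ ξ' (gaussMap^[2 * i] (Int.fract ξ)) a b c d := by
  induction i with
  | zero => exact ⟨_, _, _, _, isConvergentPair_zero h⟩
  | succ i ih =>
    obtain ⟨a, b, c, d, hi⟩ := ih
    rw [Nat.mul_succ, Function.iterate_succ_apply', Function.iterate_succ_apply']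
    exact hi.exists_gaussMap_gaussMap (irrational_gaussMap_iterate (irrational_fract hξ) _)
      (gaussMap_iterate_fract_mem_Ioo hξ _).1

/-- Weights for which the linear form `δ ↦ w δ + w' δ'` takes the values `1` and `0` at the
members `α` and `β` of a convergent pair: the two conjugates of a totally positive element of the
codifferent. -/
structure IsDualWeight (ξ ξ' w w' : ℝ) (a b c d : ℤ) : Prop where
  nonneg : 0 ≤ w
  pos_conj : 0 < w'
  apply_fst : w * (a + b * ξ) + w' * (a + b * ξ') = 1
  apply_snd : w * (c + d * ξ) + w' * (c + d * ξ') = 0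

lemma IsConvergentPair.exists_isDualWeight {ξ ξ' y : ℝ} {a b c d : ℤ}
    (h : IsConvergentPair ξ ξ' y a b c d) (hy : 0 < y) :
    ∃ w w' : ℝ, IsDualWeight ξ ξ' w w' a b c d := by
  have hα := h.pos
  have hα' := h.pos_conj
  have hβ' := h.pos_conj_snd
  set α := a + b * ξ
  set α' := a + b * ξ'
  set β' := c + d * ξ'
  have hΔ : 0 < α * (β' + α' * y) := by positivity
  refine ⟨β' / (α * (β' + α' * y)), α * y / (α * (β' + α' * y)), by positivity, by positivity, ?_,
    ?_⟩
  · rw [div_mul_eq_mul_div, div_mul_eq_mul_div, ← add_div, div_eq_one_iff_eq hΔ.ne']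
    ring
  · rw [h.eq_neg_mul, div_mul_eq_mul_div, div_mul_eq_mul_div, ← add_div, div_eq_zero_iff]
    left
    ring

namespace IsDualWeight

variable {ξ ξ' y w w' : ℝ} {a b c d : ℤ}

lemma apply_add_mul (h : IsDualWeight ξ ξ' w w' a b c d) (r : ℝ) :
    w * ((a + b * ξ) + r * (c + d * ξ)) + w' * ((a + b * ξ') + r * (c + d * ξ')) = 1 := by
  linear_combination h.apply_fst + r * h.apply_snd

lemma exists_int (h : IsDualWeight ξ ξ' w w' a b c d) (hdet : a * d - b * c = -1) (p q : ℤ) :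
    ∃ k : ℤ, w * (p + q * ξ) + w' * (p + q * ξ') = k := by
  have hdet' : (a * d - b * c : ℝ) = -1 := by exact_mod_cast hdet
  have hcoord (x : ℝ) : (p + q * x : ℝ) =
      (q * c - p * d) * (a + b * x) + (p * b - q * a) * (c + d * x) := by
    linear_combination (p + q * x) * hdet'
  refine ⟨q * c - p * d, ?_⟩
  rw [hcoord ξ, hcoord ξ']
  push_cast
  linear_combination (q * c - p * d : ℝ) * h.apply_fst + (p * b - q * a : ℝ) * h.apply_snd

lemma conj_mul_le (h : IsDualWeight ξ ξ' w w' a b c d) (hp : IsConvergentPair ξ ξ' y a b c d)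
    (hy : 0 < y) {r : ℕ} (hr : r ≤ ⌊y⁻¹⌋₊) :
    w' * ((a + b * ξ') + r * (c + d * ξ')) ≤ (r + 1) / (⌊y⁻¹⌋₊ + 1) := by
  have hr' : (r : ℝ) ≤ ⌊y⁻¹⌋₊ := by exact_mod_cast hr
  have huy : ⌊y⁻¹⌋₊ * y ≤ 1 := by
    simpa [hy.ne'] using mul_le_mul_of_nonneg_right (Nat.floor_le (inv_nonneg.2 hy.le)) hy.le
  have hα' := hp.pos_conj
  have hle := hp.le_conj
  generalize (⌊y⁻¹⌋₊ : ℝ) = u at *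
  have hw : w' * ((c + d * ξ') + (a + b * ξ') * y) = y := by
    linear_combination y * h.apply_fst + h.apply_snd - w * hp.eq_neg_mul
  generalize (a + b * ξ' : ℝ) = α', (c + d * ξ' : ℝ) = β' at *
  have hβ' : 0 < β' := hα'.trans_le hle
  have hr0 : (0 : ℝ) ≤ r := r.cast_nonneg
  have hu0 : 0 ≤ u := hr0.trans hr'
  have hmain : (u + 1) * (y * (α' + r * β')) ≤ (r + 1) * (β' + α' * y) := by
    have h₁ : 0 ≤ (u - r) * y * (β' - α') := by
      have := sub_nonneg.2 hr'
      have := sub_nonneg.2 hle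
      positivity
    have h₂ : 0 ≤ (1 - u * y) * ((r + 1) * β') := by
      have := sub_nonneg.2 huy
      positivity
    linarith
  have hden : 0 < β' + α' * y := by positivity
  rw [le_div_iff₀ (by positivity)]
  refine le_of_mul_le_mul_right ?_ hden
  calc _ = (u + 1) * (w' * (β' + α' * y) * (α' + r * β')) := by ring
    _ ≤ _ := by rwa [hw]

end IsDualWeight

end ContinuedFractions

section UniversalLattices

open scoped RealInnerProductSpace

variable {K : Type*} [Field K]

/-- `ξ` generates the ring of integers of the real quadratic field `K`, and `φ` and `φ'` are the
real embeddings of `K`. -/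
structure IsRealQuadraticGenerator (ξ : 𝓞 K) (φ φ' : K →+* ℝ) : Prop where
  eq_or_eq : ∀ ψ : K →+* ℝ, ψ = φ ∨ ψ = φ'
  exists_eq_add_mul : ∀ x : 𝓞 K, ∃ p q : ℤ, x = p + q * ξ

/-- The algebraic integer `α + r β` attached to the coefficients of a convergent pair
`α = a + b ξ`, `β = c + d ξ`. -/
def semiconvergent (ξ : 𝓞 K) (a b c d : ℤ) (r : ℕ) : 𝓞 K := (a + b * ξ) + r * (c + d * ξ)

lemma map_semiconvergent (ψ : K →+* ℝ) (ξ : 𝓞 K) (a b c d : ℤ) (r : ℕ) :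
    ψ (semiconvergent ξ a b c d r) = (a + b * ψ ξ) + r * (c + d * ψ ξ) := by
  simp [semiconvergent]

namespace IsRealQuadraticGenerator

variable {ξ : 𝓞 K} {φ φ' : K →+* ℝ} {y w w' : ℝ} {a b c d : ℤ}

lemma isTotPos_semiconvergent (hξ : IsRealQuadraticGenerator ξ φ φ')
    (hp : IsConvergentPair (φ ξ) (φ' ξ) y a b c d) (hy : Irrational y) (hy0 : 0 < y) {r : ℕ}
    (hr : r ≤ ⌊y⁻¹⌋₊) : IsTotPos (semiconvergent ξ a b c d r : K) := by
  intro ψ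
  rw [map_semiconvergent]
  rcases hξ.eq_or_eq ψ with rfl | rfl
  · exact hp.add_mul_pos hy hy0 hr
  · exact hp.add_mul_conj_pos r

lemma exists_int (hξ : IsRealQuadraticGenerator ξ φ φ')
    (hw : IsDualWeight (φ ξ) (φ' ξ) w w' a b c d) (hdet : a * d - b * c = -1) (x : 𝓞 K) :
    ∃ k : ℤ, w * φ x + w' * φ' x = k := by
  obtain ⟨p, q, rfl⟩ := hξ.exists_eq_add_mul x
  simpa using hw.exists_int hdet p q

/- The twisted trace form `w φ (B v v') + w' φ' (B v v')` turns the vectors representing the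
`m`-fold semiconvergents into vectors of norm `m` of an integral lattice. -/
theorem exists_isSplitSystem [NumberField K] {R m : ℕ} (hξ : IsRealQuadraticGenerator ξ φ φ')
    (hK : HasClassicalMUniversal K R m) (hm : 1 ≤ m)
    (hp : IsConvergentPair (φ ξ) (φ' ξ) y a b c d) (hy : Irrational y) (hy0 : 0 < y) :
    ∃ z : Fin (⌊y⁻¹⌋₊ + 1) → WithLp 2 (EuclideanSpace ℝ (Fin (Module.finrank K (Fin R → K))) ×
      EuclideanSpace ℝ (Fin (Module.finrank K (Fin R → K)))), IsSplitSystem m z := by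
  obtain ⟨B, Λ, hsymm, -, hspan, hpos, hint, huniv⟩ := hK
  have hm0 : (0 : ℝ) < m := by exact_mod_cast hm
  have hr (r : Fin (⌊y⁻¹⌋₊ + 1)) : (r : ℕ) ≤ ⌊y⁻¹⌋₊ := Nat.le_of_lt_succ r.2
  have hBpos (ψ : K →+* ℝ) (v : Fin R → K) (hv : v ≠ 0) : 0 < ψ (B v v) :=
    isTotPos_apply_self_of_span_eq_top hspan hpos hv ψ
  obtain ⟨w, w', hw⟩ := hp.exists_isDualWeight hy0
  obtain ⟨T, hT⟩ := exists_euclidean_realization hsymm (hBpos φ) hw.nonneg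
  obtain ⟨T', hT'⟩ := exists_euclidean_realization hsymm (hBpos φ') hw.pos_conj.le
  choose v hvΛ hv using fun r : Fin (⌊y⁻¹⌋₊ + 1) =>
    huniv (semiconvergent ξ a b c d r) fun ψ => by
      simpa using mul_pos hm0 (hξ.isTotPos_semiconvergent hp hy hy0 (hr r) ψ)
  let z r := WithLp.toLp 2 (T' (v r), T (v r))
  have hz (r s) : ⟪z r, z s⟫ = w * φ (B (v r) (v s)) + w' * φ' (B (v r) (v s)) := by
    rw [WithLp.prod_inner_apply, hT, hT', add_comm]
  have hB (ψ : K →+* ℝ) (r) :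
      ψ (B (v r) (v r)) = m * ((a + b * ψ ξ) + (r : ℕ) * (c + d * ψ ξ)) := by
    rw [hv, map_mul, map_natCast, ← map_semiconvergent]
  have hfst (r) : ‖(z r).fst‖ ^ 2 = w' * (m * ((a + b * φ' ξ) + (r : ℕ) * (c + d * φ' ξ))) :=
    (real_inner_self_eq_norm_sq _).symm.trans ((hT' _ _).trans (by rw [hB]))
  have hself (r) : ⟪z r, z r⟫ = m := by
    rw [hz, hB, hB]
    linear_combination (m : ℝ) * hw.apply_add_mul r
  refine ⟨z, .of_injective_norm_fst hm hself (fun r s => ?_) (fun r s h => ?_) fun r => ?_⟩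
  · obtain ⟨x, hx⟩ := hint _ (hvΛ r) _ (hvΛ s)
    rw [hz, ← hx]
    exact hξ.exists_int hw hp.det x
  · have := congrArg (· ^ 2) h
    simpa [hfst, hw.pos_conj.ne', hm0.ne', hp.pos_conj_snd.ne', Fin.val_inj] using this
  · rw [hfst, mul_left_comm, mul_div_assoc, Nat.cast_succ]
    gcongr
    exact hw.conj_mul_le hp hy0 (hr r)

theorem cfCoeff_lt_Bbound [NumberField K] {R m : ℕ} (hξ : IsRealQuadraticGenerator ξ φ φ')
    (hK : HasClassicalMUniversal K R m) (hm : 1 ≤ m) (hirr : Irrational (φ ξ))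
    (hconj : 1 ≤ ⌊φ ξ⌋ - φ' ξ) (i : ℕ) :
    (cfCoeff (Int.fract (φ ξ)) (2 * i + 1) : ℝ) < Bbound R m := by
  obtain ⟨a, b, c, d, hp⟩ := exists_isConvergentPair hirr hconj i
  obtain ⟨z, hz⟩ := hξ.exists_isSplitSystem hK hm hp
    (irrational_gaussMap_iterate (irrational_fract hirr) _)
    (gaussMap_iterate_fract_mem_Ioo hirr _).1
  have hbound := hz.two_mul_le_Cbound (R := R) (by simp) (by simp) hm
  rw [Nat.cast_succ] at hbound
  rw [cfCoeff, Bbound, Nat.add_sub_cancel]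
  linarith

end IsRealQuadraticGenerator

end UniversalLattices

section QuadraticField

variable {D : ℕ}

lemma irrational_sqrt_of_squarefree (hD : 1 < D) (hsf : Squarefree D) : Irrational √(D : ℝ) := by
  rw [irrational_sqrt_natCast_iff]
  rintro ⟨a, rfl⟩
  exact hD.ne' (by simpa using hsf a dvd_rfl)

lemma isIntegral_sqrt_natCast (A : Type*) [CommRing A] [Algebra A ℝ] (n : ℕ) :
    IsIntegral A √(n : ℝ) :=
  .of_pow two_pos (by
    rw [Real.sq_sqrt n.cast_nonneg]
    exact isIntegral_natCast (R := A) n)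

instance numberFieldQsqrtD (D : ℕ) : NumberField (QsqrtD D) where
  to_charZero := inferInstance
  to_finiteDimensional := IntermediateField.adjoin.finiteDimensional (isIntegral_sqrt_natCast ℚ D)

/-- `√D` as an element of `ℚ(√D)`. -/
noncomputable def sqrtD (D : ℕ) : QsqrtD D :=
  IntermediateField.AdjoinSimple.gen ℚ √(D : ℝ)

lemma coe_sqrtD : (sqrtD D : ℝ) = √(D : ℝ) := rfl

lemma sqrtD_sq : sqrtD D ^ 2 = D := Subtype.ext (by simp [coe_sqrtD])

lemma minpoly_sqrt (hD : 1 < D) (hsf : Squarefree D) :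
    minpoly ℚ √(D : ℝ) = Polynomial.X ^ 2 - Polynomial.C (D : ℚ) := by
  refine (minpoly.eq_of_irreducible_of_monic ?_ (by simp)
    (Polynomial.monic_X_pow_sub_C _ two_ne_zero)).symm
  refine (X_pow_sub_C_irreducible_iff_of_prime Nat.prime_two).2 fun q hq => ?_
  refine irrational_sqrt_of_squarefree hD hsf ⟨|q|, ?_⟩
  rw [← Rat.cast_natCast, ← hq]
  simp [Real.sqrt_sq_eq_abs]

lemma exists_eq_add_mul_sqrtD (hD : 1 < D) (hsf : Squarefree D) (x : QsqrtD D) :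
    ∃ p q : ℚ, x = (p : QsqrtD D) + q * sqrtD D := by
  have hint := isIntegral_sqrt_natCast ℚ D
  obtain ⟨f, hf, rfl⟩ := (IntermediateField.adjoin.powerBasis hint).exists_eq_aeval x
  rw [IntermediateField.adjoin.powerBasis_dim, minpoly_sqrt hD hsf,
    Polynomial.natDegree_X_pow_sub_C] at hf
  obtain ⟨q, p, rfl⟩ := Polynomial.exists_eq_X_add_C_of_natDegree_le_one (Nat.le_of_lt_succ hf)
  exact ⟨p, q, Subtype.ext (by simp [add_comm, coe_sqrtD])⟩

lemma exists_conj (hD : 1 < D) (hsf : Squarefree D) :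
    ∃ φ' : QsqrtD D →+* ℝ, φ' (sqrtD D) = -√(D : ℝ) := by
  have hint := isIntegral_sqrt_natCast ℚ D
  have hroot : -√(D : ℝ) ∈ (minpoly ℚ √(D : ℝ)).aroots ℝ :=
    Polynomial.mem_aroots.2 ⟨minpoly.ne_zero hint, by simp [minpoly_sqrt hD hsf]⟩
  exact ⟨((IntermediateField.algHomAdjoinIntegralEquiv ℚ hint).symm ⟨_, hroot⟩).toRingHom,
    IntermediateField.algHomAdjoinIntegralEquiv_symm_apply_gen ℚ hint ⟨_, hroot⟩⟩

lemma eq_or_eq_of_apply_sqrtD (hD : 1 < D) (hsf : Squarefree D)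
    {φ φ' : QsqrtD D →+* ℝ} (hφ : φ (sqrtD D) = √(D : ℝ))
    (hφ' : φ' (sqrtD D) = -√(D : ℝ)) (ψ : QsqrtD D →+* ℝ) : ψ = φ ∨ ψ = φ' := by
  have hext {χ : QsqrtD D →+* ℝ} (h : ψ (sqrtD D) = χ (sqrtD D)) : ψ = χ := by
    ext x
    obtain ⟨p, q, rfl⟩ := exists_eq_add_mul_sqrtD hD hsf x
    simp [h]
  have hsq : ψ (sqrtD D) ^ 2 = √(D : ℝ) ^ 2 := by
    rw [← map_pow, sqrtD_sq, map_natCast, Real.sq_sqrt D.cast_nonneg]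
  exact (sq_eq_sq_iff_eq_or_eq_neg.1 hsq).imp (fun h => hext (h.trans hφ.symm))
    fun h => hext (h.trans hφ'.symm)

/-- The generator of the ring of integers of `ℚ(√D)` as an element of the field; its real value is
`xi D`. -/
noncomputable def xiElt (D : ℕ) : QsqrtD D :=
  if D % 4 = 1 then (1 + sqrtD D) / 2 else sqrtD D

lemma map_xiElt (ψ : QsqrtD D →+* ℝ) :
    ψ (xiElt D) = if D % 4 = 1 then (1 + ψ (sqrtD D)) / 2 else ψ (sqrtD D) := by
  rw [xiElt, apply_ite ψ]
  simp only [map_div₀, map_add, map_one, map_ofNat]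

lemma irrational_xi (hD : 1 < D) (hsf : Squarefree D) : Irrational (xi D) := by
  have hsqrt := irrational_sqrt_of_squarefree hD hsf
  unfold xi
  split_ifs
  · simpa using (hsqrt.natCast_add 1).div_natCast two_ne_zero
  · exact hsqrt

lemma one_lt_sqrt_natCast (hD : 1 < D) : 1 < √(D : ℝ) :=
  Real.lt_sqrt_of_sq_lt (by simpa using hD)

lemma one_le_xi (hD : 1 < D) : 1 ≤ xi D := by
  have := one_lt_sqrt_natCast hD
  unfold xi
  split_ifs <;> linarith

lemma map_xiElt_neg (hD : 1 < D) {φ' : QsqrtD D →+* ℝ} (hφ' : φ' (sqrtD D) = -√(D : ℝ)) :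
    φ' (xiElt D) < 0 := by
  have := one_lt_sqrt_natCast hD
  rw [map_xiElt, hφ']
  split_ifs <;> linarith

lemma isIntegral_xiElt : IsIntegral ℤ (xiElt D) := by
  have hD : sqrtD D ^ 2 = D := sqrtD_sq
  unfold xiElt
  split_ifs with h
  · refine ⟨.X ^ 2 - .X - .C (D / 4 : ℤ), by monicity!, ?_⟩
    have hD4 : (D : QsqrtD D) = 4 * (D / 4 : ℤ) + 1 := by
      have : (D : ℤ) = 4 * (D / 4 : ℤ) + 1 := by omega
      exact_mod_cast congrArg (Int.cast (R := QsqrtD D)) this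
    simp only [Polynomial.eval₂_sub, Polynomial.eval₂_pow, Polynomial.eval₂_X, Polynomial.eval₂_C]
    rw [eq_intCast]
    linear_combination (1 / 4 : QsqrtD D) * hD + (1 / 4 : QsqrtD D) * hD4
  · exact .of_pow two_pos (hD ▸ isIntegral_natCast (R := ℤ) D)

lemma exists_intCast_eq_of_isIntegral_ratCast {K : Type*} [Field K] [CharZero K] {q : ℚ}
    (hq : IsIntegral ℤ (q : K)) : ∃ s : ℤ, (s : ℚ) = q := by
  rw [← eq_ratCast (algebraMap ℚ K), isIntegral_algebraMap_iff (algebraMap ℚ K).injective] at hq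
  exact IsIntegrallyClosed.isIntegral_iff.1 hq

lemma exists_intCast_eq_of_squarefree_mul_sq_eq (hsf : Squarefree D) {q : ℚ} {N : ℤ}
    (h : D * q ^ 2 = N) : ∃ s : ℤ, (s : ℚ) = q := by
  have hD : (D : ℚ) ≠ 0 := by exact_mod_cast hsf.ne_zero
  have hint : IsIntegral ℤ (D * q) := .of_pow two_pos (by
    rw [show ((D * q) ^ 2 : ℚ) = ((D * N : ℤ) : ℚ) by push_cast; rw [← h]; ring]
    exact isIntegral_intCast (R := ℤ) _)
  obtain ⟨k, hk⟩ := IsIntegrallyClosed.isIntegral_iff.1 hint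
  rw [eq_intCast] at hk
  have hk_sq : k ^ 2 = D * N := by
    have : (k : ℚ) ^ 2 = D * N := by rw [hk, ← h]; ring
    exact_mod_cast this
  obtain ⟨s, rfl⟩ := ((Int.squarefree_natCast.2 hsf).dvd_pow_iff_dvd two_ne_zero).1 ⟨N, hk_sq⟩
  exact ⟨s, mul_left_cancel₀ hD (by exact_mod_cast hk)⟩

/- The trace and the norm of an algebraic integer are integers. -/
lemma exists_int_half_coords (hD : 1 < D) (hsf : Squarefree D) {x : QsqrtD D}
    (hx : IsIntegral ℤ x) : ∃ t s n : ℤ, x = (t + s * sqrtD D) / 2 ∧ t ^ 2 - D * s ^ 2 = 4 * n := by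
  obtain ⟨φ', hφ'⟩ := exists_conj hD hsf
  obtain ⟨p, q, rfl⟩ := exists_eq_add_mul_sqrtD hD hsf x
  have hsqrt : √(D : ℝ) ^ 2 = D := Real.sq_sqrt D.cast_nonneg
  have h₁ : IsIntegral ℤ (p + q * √(D : ℝ)) := by
    simpa [coe_sqrtD] using hx.map (algebraMap (QsqrtD D) ℝ).toIntAlgHom
  have h₂ : IsIntegral ℤ (p + q * -√(D : ℝ)) := by simpa [hφ'] using hx.map φ'.toIntAlgHom
  have hp_two : p + q * √(D : ℝ) + (p + q * -√(D : ℝ)) = (2 * p : ℚ) := by push_cast; ring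
  have hpq : (p + q * √(D : ℝ)) * (p + q * -√(D : ℝ)) = (p ^ 2 - D * q ^ 2 : ℚ) := by
    push_cast
    linear_combination -(q ^ 2 : ℝ) * hsqrt
  obtain ⟨t, ht⟩ := exists_intCast_eq_of_isIntegral_ratCast (K := ℝ) (hp_two ▸ h₁.add h₂)
  obtain ⟨n, hn⟩ := exists_intCast_eq_of_isIntegral_ratCast (K := ℝ) (hpq ▸ h₁.mul h₂)
  obtain ⟨s, hs⟩ := exists_intCast_eq_of_squarefree_mul_sq_eq hsf (q := 2 * q)
    (N := t ^ 2 - 4 * n) (by push_cast; rw [ht, hn]; ring)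
  refine ⟨t, s, n, ?_, ?_⟩
  · have ht' : (t : QsqrtD D) = 2 * p := by exact_mod_cast congrArg (Rat.cast (K := QsqrtD D)) ht
    have hs' : (s : QsqrtD D) = 2 * q := by exact_mod_cast congrArg (Rat.cast (K := QsqrtD D)) hs
    rw [ht', hs']
    ring
  · have : (t ^ 2 - D * s ^ 2 : ℚ) = 4 * n := by rw [ht, hs, hn]; ring
    exact_mod_cast this

lemma two_dvd_sub_of_sq_sub_mul_sq_eq {t s n : ℤ} (hD : D % 4 = 1)
    (h : t ^ 2 - D * s ^ 2 = 4 * n) : 2 ∣ t - s := by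
  have hD_odd : ¬ Even (D : ℤ) := by rw [Int.not_even_iff_odd, Int.odd_iff]; omega
  have heven : Even (t ^ 2 - D * s ^ 2) := ⟨2 * n, by rw [h]; ring⟩
  rw [← even_iff_two_dvd]
  simpa [Int.even_sub, Int.even_mul, Int.even_pow, hD_odd] using heven

lemma two_dvd_of_sq_sub_mul_sq_eq {t s n : ℤ} (hD₀ : D % 4 ≠ 0) (hD₁ : D % 4 ≠ 1)
    (h : t ^ 2 - D * s ^ 2 = 4 * n) : 2 ∣ t ∧ 2 ∣ s := by
  have hZMod : ∀ e t s n : ZMod 4, e ≠ 0 → e ≠ 1 → t ^ 2 - e * s ^ 2 = 4 * n →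
      2 * t = 0 ∧ 2 * s = 0 := by decide
  have hcast {k : ℕ} (hk : D % 4 ≠ k % 4) : (D : ZMod 4) ≠ k :=
    fun h => hk ((ZMod.natCast_eq_natCast_iff' _ _ _).1 h)
  have htwo {k : ℤ} (hk : (2 * k : ZMod 4) = 0) : 2 ∣ k := by
    have : ((4 : ℕ) : ℤ) ∣ 2 * k :=
      (ZMod.intCast_zmod_eq_zero_iff_dvd _ _).1 (by exact_mod_cast hk)
    omega
  obtain ⟨ht, hs⟩ := hZMod D t s n (by simpa using hcast (k := 0) hD₀)
    (by simpa using hcast (k := 1) hD₁) (by exact_mod_cast congrArg (Int.cast (R := ZMod 4)) h)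
  exact ⟨htwo ht, htwo hs⟩

lemma exists_eq_add_mul_xiElt (hD : 1 < D) (hsf : Squarefree D) {x : QsqrtD D}
    (hx : IsIntegral ℤ x) : ∃ p q : ℤ, x = p + q * xiElt D := by
  obtain ⟨t, s, n, rfl, hn⟩ := exists_int_half_coords hD hsf hx
  unfold xiElt
  split_ifs with h
  · obtain ⟨k, hk⟩ := two_dvd_sub_of_sq_sub_mul_sq_eq h hn
    obtain rfl : t = s + 2 * k := by linarith
    exact ⟨k, s, by push_cast; ring⟩
  · have h₀ : D % 4 ≠ 0 := fun h₀ => by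
      simpa using hsf 2 (Nat.dvd_of_mod_eq_zero h₀)
    obtain ⟨⟨k, rfl⟩, ⟨l, rfl⟩⟩ := two_dvd_of_sq_sub_mul_sq_eq h₀ h hn
    exact ⟨k, l, by push_cast; ring⟩

theorem exists_isRealQuadraticGenerator (hD : 1 < D) (hsf : Squarefree D) :
    ∃ (ξ : 𝓞 (QsqrtD D)) (φ φ' : QsqrtD D →+* ℝ),
      IsRealQuadraticGenerator ξ φ φ' ∧ φ ξ = xi D ∧ φ' ξ < 0 := by
  obtain ⟨φ', hφ'⟩ := exists_conj hD hsf
  obtain ⟨ξ, hξ⟩ : ∃ ξ : 𝓞 (QsqrtD D), (ξ : QsqrtD D) = xiElt D := ⟨⟨_, isIntegral_xiElt⟩, rfl⟩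
  refine ⟨ξ, algebraMap (QsqrtD D) ℝ, φ', ⟨eq_or_eq_of_apply_sqrtD hD hsf coe_sqrtD hφ',
    fun x => ?_⟩, hξ ▸ map_xiElt _, hξ ▸ map_xiElt_neg hD hφ'⟩
  obtain ⟨p, q, h⟩ := exists_eq_add_mul_xiElt hD hsf x.isIntegral_coe
  exact ⟨p, q, RingOfIntegers.ext (by simpa [hξ] using h)⟩

end QuadraticField

theorem stmt17 (D : ℕ) (hD : 1 < D) (hsf : Squarefree D)
    (m R : ℕ) (hm : 1 ≤ m) (hR : 1 ≤ R)
    (h : HasClassicalMUniversal (QsqrtD D) R m) :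
    ∀ i : ℕ, (cfCoeff (Int.fract (xi D)) (2 * i + 1) : ℝ) < Bbound R m := by
  intro i
  obtain ⟨ξ, φ, φ', hξ, hφ, hφ'⟩ := exists_isRealQuadraticGenerator hD hsf
  rw [← hφ]
  refine hξ.cfCoeff_lt_Bbound h hm (hφ ▸ irrational_xi hD hsf) ?_ i
  have hfloor : (1 : ℝ) ≤ ⌊xi D⌋ := by
    exact_mod_cast Int.le_floor.2 (by exact_mod_cast one_le_xi hD)
  rw [hφ]
  linarith
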